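/- Let Δ⃗_n = (Δ_{n,1},…,Δ_{n,d}) be collections of pairwise disjoint closed intervals converging componentwise to pairwise disjoint closed intervals Δ⃗ = (Δ_1,…,Δ_d), and let 𝔅_n be either C(Δ⃗_n) or C¹(Δ⃗_n). Then there is a constant C, independent of n, such that ‖(I − ℋ_{Δ⃗_n})^{−1}‖_{𝔅_n} ≤ C for all n. Moreover, if Δ⃗′ = (Δ′_1,…,Δ′_d) are pairwise disjoint closed intervals with Δ_{n,i} ⊆ Δ′_i for all n and i, and 𝔅′ is either C(Δ⃗′) or C¹(Δ⃗′), then there is a constant C′, independent of n, such that ‖(I − ℋ_{Δ⃗_n,Δ⃗′})^{−1}‖_{𝔅′} ≤ C′ for all n. -/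

import Mathlib

open MeasureTheory Set Filter Topology Polynomial

noncomputable section

/-- The arcsine distribution `dω_[a,b](x) = dx/(π √((x−a)(b−x)))` on `[a,b]`. -/
def arcsineMeasure (a b : ℝ) : Measure ℝ :=
  (volume.restrict (Set.Icc a b)).withDensity
    fun x => ENNReal.ofReal (1 / (Real.pi * Real.sqrt ((x - a) * (b - x))))

/-- The branch of `√((z−a)(z−b))` holomorphic off `[a,b]` with `w(z) = z + O(1)` at `∞`. -/
def wBranch (a b : ℝ) (z : ℂ) : ℂ :=
  (z - a) * Complex.exp ((1 / 2 : ℂ) * Complex.log ((z - b) / (z - a)))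

/-- Cauchy transform `∫ u(x)/(z−x) dω_[a,b](x)`. -/
def cauchyT (a b : ℝ) (u : ℝ → ℝ) (z : ℂ) : ℂ :=
  ∫ x, (u x : ℂ) / (z - (x : ℂ)) ∂(arcsineMeasure a b)

/-- `H_Δ u`, the harmonic extension of `u` off `Δ = [a,b]`. -/
def harmExt (a b : ℝ) (u : ℝ → ℝ) (z : ℂ) : ℝ :=
  (wBranch a b z * cauchyT a b u z).re

/-- The outer function `Ω_Δ(f,z) := exp( w_Δ(z) ∫ log f(x)/(z−x) dω_Δ(x) )`. -/
def OmegaFun (a b : ℝ) (f : ℝ → ℝ) (z : ℂ) : ℂ :=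
  Complex.exp (wBranch a b z * cauchyT a b (fun x => Real.log (f x)) z)

/-- The value of `Ω_Δ(f,·)` at infinity: `exp( ∫ log f dω_Δ )`. -/
def OmegaInf (a b : ℝ) (f : ℝ → ℝ) : ℝ :=
  Real.exp (∫ x, Real.log (f x) ∂(arcsineMeasure a b))

/-- Radon–Nikodym derivative `μ′` of `μ` with respect to Lebesgue measure. -/
def lebDeriv (μ : Measure ℝ) (x : ℝ) : ℝ := (μ.rnDeriv volume x).toReal

/-- `v_Δ(x) = π μ′(x) √((x−a)(b−x))`, the density of `μ|_Δ` w.r.t. the arcsine law. -/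
def vDens (μ : Measure ℝ) (a b : ℝ) (x : ℝ) : ℝ :=
  Real.pi * lebDeriv μ x * Real.sqrt ((x - a) * (b - x))

/-- Szegő function `G(e^h μ|_[a,b], z)`. -/
def szegoG (μ : Measure ℝ) (a b : ℝ) (h : ℝ → ℝ) (z : ℂ) : ℂ :=
  OmegaFun a b (fun x => Real.sqrt (Real.exp (h x) * vDens μ a b x)) z

/-- Szegő function `G(e^h μ|_[a,b], ·)` at infinity. -/
def szegoGInf (μ : Measure ℝ) (a b : ℝ) (h : ℝ → ℝ) : ℝ :=
  OmegaInf a b fun x => Real.sqrt (Real.exp (h x) * vDens μ a b x)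

/-- Support of a measure on `ℝ`. -/
def msupp (μ : Measure ℝ) : Set ℝ := {x | ∀ ε > 0, 0 < μ (Metric.ball x ε)}

def suppInf (μ : Measure ℝ) : ℝ := sInf (msupp μ)
def suppSup (μ : Measure ℝ) : ℝ := sSup (msupp μ)

/-- `Δ(μ)`, the convex hull of the support of `μ`. -/
def convHullSupp (μ : Measure ℝ) : Set ℝ := Set.Icc (suppInf μ) (suppSup μ)

/-- Logarithmic potential `V^ω(x) = −∫ log|x−t| dω(t)`. -/
def logPot (ω : Measure ℝ) (x : ℝ) : ℝ := -∫ t, Real.log |x - t| ∂ω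

/-- The Szegő condition `μ ∈ Sz([a,b])`. -/
def SzCond (μ : Measure ℝ) (a b : ℝ) : Prop :=
  Integrable (fun x => Real.log (lebDeriv μ x)) (arcsineMeasure a b)

/-- The increasing affine map of `[a,b]` onto `[c,d]`. -/
def affIcc (a b c d : ℝ) (x : ℝ) : ℝ := c + ((d - c) / (b - a)) * (x - a)

/-- The uniform Szegő condition `μ ∈ USz([a,b])`. -/
def USzCond (μ : Measure ℝ) (a b : ℝ) : Prop :=
  SzCond μ a b ∧
  ∀ A B : ℕ → ℝ, (∀ n, A n < B n) → (∀ n, Set.Icc (A n) (B n) ⊆ convHullSupp μ) →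
    Tendsto A atTop (𝓝 a) → Tendsto B atTop (𝓝 b) →
    (∀ᶠ n in atTop, SzCond μ (A n) (B n)) ∧
    Tendsto (fun n => ∫ x,
        |Real.log (lebDeriv μ x) - Real.log (lebDeriv μ (affIcc a b (A n) (B n) x))|
          ∂(arcsineMeasure a b)) atTop (𝓝 0)

/-- `P` is the `n`-th monic orthogonal polynomial with respect to `ν`. -/
def IsMonicOP (ν : Measure ℝ) (n : ℕ) (P : Polynomial ℝ) : Prop :=
  P.Monic ∧ P.natDegree = n ∧ ∀ k < n, ∫ x, x ^ k * P.eval x ∂ν = 0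

/-- The weighted measure `e^θ μ`. -/
def expWt (μ : Measure ℝ) (θ : ℝ → ℝ) : Measure ℝ :=
  μ.withDensity fun x => ENNReal.ofReal (Real.exp (θ x))

/-- An Angelesco system of `d` measures, with `Δ(μ_i) = [lo i, hi i]`. -/
structure Angelesco (d : ℕ) (μ : Fin d → Measure ℝ) (lo hi : Fin d → ℝ) : Prop where
  two_le : 2 ≤ d
  bounded : ∀ i, Bornology.IsBounded (msupp (μ i))
  infinite : ∀ i, (msupp (μ i)).Infinite
  lo_eq : ∀ i, lo i = suppInf (μ i)
  hi_eq : ∀ i, hi i = suppSup (μ i)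
  sep : ∀ i j, i < j → hi i < lo j

/-- The vector equilibrium measure `(ω_1,…,ω_d)` with parameter `c`,
with `supp ω_i = [A i, B i] ⊆ [lo i, hi i]` and masses `c i`. -/
structure VecEquil (d : ℕ) (lo hi : Fin d → ℝ) (c : Fin d → ℝ)
    (ω : Fin d → Measure ℝ) (A B : Fin d → ℝ) : Prop where
  endpoints : ∀ i, lo i ≤ A i ∧ A i < B i ∧ B i ≤ hi i
  supp : ∀ i, msupp (ω i) = Set.Icc (A i) (B i)
  mass : ∀ i, ω i Set.univ = ENNReal.ofReal (c i)
  equil : ∀ j, ∃ ℓ : ℝ,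
    (∀ x ∈ Set.Icc (A j) (B j), logPot (ω j) x + ∑ i, logPot (ω i) x = ℓ) ∧
    (∀ x ∈ Set.Icc (lo j) (hi j) \ Set.Icc (A j) (B j),
        ℓ < logPot (ω j) x + ∑ i, logPot (ω i) x)

/-- The vector `(S_1,…,S_d)` of conjugate-symmetric outer functions in `H²(D_{Δ_i})`,
positive at infinity, with boundary moduli `g_i` satisfying
`|S_{i±}|² ∏_{j≠i} S_j = v_i` a.e. on `Δ_i` (outer functions positive at infinity are
recovered from their boundary moduli by `S_i = Ω_{Δ_i}(g_i, ·)`). -/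
def IsSzegoVector (d : ℕ) (A B : Fin d → ℝ) (v : Fin d → ℝ → ℝ)
    (g : Fin d → ℝ → ℝ) (S : Fin d → ℂ → ℂ) : Prop :=
  (∀ i x, 0 ≤ g i x) ∧
  (∀ i, Integrable (fun x => Real.log (g i x)) (arcsineMeasure (A i) (B i))) ∧
  (∀ i, S i = fun z => OmegaFun (A i) (B i) (g i) z) ∧
  (∀ i, ∀ᵐ x ∂(arcsineMeasure (A i) (B i)),
    (g i x) ^ 2 * ∏ j ∈ Finset.univ.erase i, (S j (x : ℂ)).re = v i x)

/-- The operator `ℋ` with component `i` equal to `−(1/2) Σ_{j≠i} H_{[A j, B j]} u_j`. -/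
def calH (d : ℕ) (A B : Fin d → ℝ) (u : Fin d → ℝ → ℝ) (i : Fin d) (x : ℝ) : ℝ :=
  -(1 / 2) * ∑ j ∈ Finset.univ.erase i, harmExt (A j) (B j) (u j) (x : ℂ)

/-- sup norm over `[a,b]`. -/
def supIcc (a b : ℝ) (f : ℝ → ℝ) : ℝ := sSup ((fun x => |f x|) '' Set.Icc a b)

/-- Norm of `C(Δ⃗)`. -/
def vecCNorm (d : ℕ) (A B : Fin d → ℝ) (u : Fin d → ℝ → ℝ) : ℝ :=
  ∑ i, supIcc (A i) (B i) (u i)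

/-- Norm of `C¹(Δ⃗)`. -/
def vecC1Norm (d : ℕ) (A B : Fin d → ℝ) (u : Fin d → ℝ → ℝ) : ℝ :=
  ∑ i, (supIcc (A i) (B i) (u i) +
    supIcc (A i) (B i) (derivWithin (u i) (Set.Icc (A i) (B i))))

/-- membership in `C(Δ⃗)`. -/
def memVecC (d : ℕ) (A B : Fin d → ℝ) (u : Fin d → ℝ → ℝ) : Prop :=
  ∀ i, ContinuousOn (u i) (Set.Icc (A i) (B i))

/-- membership in `C¹(Δ⃗)`. -/
def memVecC1 (d : ℕ) (A B : Fin d → ℝ) (u : Fin d → ℝ → ℝ) : Prop :=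
  ∀ i, ContDiffOn ℝ 1 (u i) (Set.Icc (A i) (B i))

/-- `|w_Δ(x)|` for real `x`. -/
def wAbs (p q x : ℝ) : ℝ := Real.sqrt |(x - p) * (x - q)|

/-- Riemann–Liouville type fractional integral of order 1/2. -/
def fracInt (γ : ℝ) (θ : ℝ → ℝ) (x : ℝ) : ℝ :=
  (Real.sqrt Real.pi)⁻¹ * ∫ t in γ..x, θ t / Real.sqrt |x - t|


/-- Uniform invertibility bound for the family of operators `u ↦ calH d A' B' u` acting on
vector functions over the intervals `[A i, B i]`, with membership `mem` and norm `nrm`: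
`I − ℋ` is surjective and `‖(I − ℋ)⁻¹‖ ≤ C`. -/
def InvBoundedBy (d : ℕ) (A' B' A B : Fin d → ℝ)
    (mem : (Fin d → ℝ → ℝ) → Prop) (nrm : (Fin d → ℝ → ℝ) → ℝ) (C : ℝ) : Prop :=
  (∀ a, mem a → ∃ u, mem u ∧
    ∀ i, ∀ x ∈ Set.Icc (A i) (B i), u i x = calH d A' B' u i x + a i x) ∧
  (∀ u a, mem u → mem a →
    (∀ i, ∀ x ∈ Set.Icc (A i) (B i), u i x = calH d A' B' u i x + a i x) →
    nrm u ≤ C * nrm a)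

/-! ### The arcsine law and the kernel -/

def rhoD (a b t : ℝ) : ℝ := 1 / (Real.pi * Real.sqrt ((t - a) * (b - t)))

lemma rhoD_nonneg (a b t : ℝ) : 0 ≤ rhoD a b t := by
  unfold rhoD; positivity

lemma rhoD_meas (a b : ℝ) : Measurable (rhoD a b) := by
  unfold rhoD; fun_prop

lemma arc_eq (a b : ℝ) : arcsineMeasure a b =
    (volume.restrict (Set.Icc a b)).withDensity fun x => ENNReal.ofReal (rhoD a b x) := rfl

lemma arc_integral {a b : ℝ} (hab : a < b) (f : ℝ → ℝ) :
    ∫ t, f t ∂(arcsineMeasure a b) = ∫ t in a..b, rhoD a b t * f t := by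
  rw [arc_eq, integral_withDensity_eq_integral_toReal_smul
    (rhoD_meas a b).ennreal_ofReal (by simp), intervalIntegral.integral_of_le hab.le,
    integral_Icc_eq_integral_Ioc]
  simp [ENNReal.toReal_ofReal (rhoD_nonneg a b _)]

lemma arc_integrable {a b : ℝ} (hab : a < b) (f : ℝ → ℝ) :
    Integrable f (arcsineMeasure a b) ↔
      IntervalIntegrable (fun t => rhoD a b t * f t) volume a b := by
  rw [arc_eq, integrable_withDensity_iff_integrable_smul'
    (rhoD_meas a b).ennreal_ofReal (by simp), intervalIntegrable_iff_integrableOn_Icc_of_le hab.le]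
  simp [ENNReal.toReal_ofReal (rhoD_nonneg a b _), IntegrableOn]

lemma arc_ac (a b : ℝ) : arcsineMeasure a b ≪ volume.restrict (Set.Icc a b) :=
  withDensity_absolutelyContinuous _ _

lemma arc_ae (a b : ℝ) : ∀ᵐ t ∂(arcsineMeasure a b), t ∈ Set.Icc a b :=
  (arc_ac a b) (ae_restrict_mem measurableSet_Icc)

lemma arc_meas {a b : ℝ} {f : ℝ → ℝ} (hf : ContinuousOn f (Set.Icc a b)) :
    AEStronglyMeasurable f (arcsineMeasure a b) :=
  (hf.aestronglyMeasurable measurableSet_Icc).mono_ac (arc_ac a b)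

/-- `x` lies off `[a,b]`. -/
def OffI (a b x : ℝ) : Prop := x < a ∨ b < x

def Wr (a b x : ℝ) : ℝ := (x - a) * Real.sqrt ((x - b) / (x - a))

lemma ratio_pos {a b x : ℝ} (hab : a < b) (hx : OffI a b x) : 0 < (x - b) / (x - a) := by
  rcases hx with h | h
  · exact div_pos_of_neg_of_neg (by linarith) (by linarith)
  · exact div_pos (by linarith) (by linarith)

lemma sub_ne_of_off {a b x t : ℝ} (hx : OffI a b x) (ht : t ∈ Set.Icc a b) : x - t ≠ 0 := by
  rcases hx with h | h
  · have := ht.1; intro h'; linarith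
  · have := ht.2; intro h'; linarith

lemma Wr_sq {a b x : ℝ} (hab : a < b) (hx : OffI a b x) : Wr a b x ^ 2 = (x - a) * (x - b) := by
  have h := ratio_pos hab hx
  have h2 : x - a ≠ 0 := sub_ne_of_off hx ⟨le_rfl, hab.le⟩
  unfold Wr
  rw [mul_pow, Real.sq_sqrt h.le]
  field_simp

lemma Wr_div_pos {a b x t : ℝ} (hab : a < b) (hx : OffI a b x) (ht : t ∈ Set.Icc a b) :
    0 < Wr a b x / (x - t) := by
  have h := Real.sqrt_pos.2 (ratio_pos hab hx)
  unfold Wr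
  rcases hx with h1 | h1
  · apply div_pos_of_neg_of_neg
    · apply mul_neg_of_neg_of_pos _ h
      linarith
    · linarith [ht.1]
  · apply div_pos
    · apply mul_pos _ h
      linarith
    · linarith [ht.2]

lemma Wr_ne {a b x : ℝ} (hab : a < b) (hx : OffI a b x) : Wr a b x ≠ 0 := by
  intro h
  have := Wr_div_pos hab hx (t := a) ⟨le_rfl, hab.le⟩
  simp [h] at this

lemma wBranch_real {a b x : ℝ} (hab : a < b) (hx : OffI a b x) :
    wBranch a b (x : ℂ) = ((Wr a b x : ℝ) : ℂ) := by
  have h := ratio_pos hab hx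
  unfold wBranch Wr
  have e : ((x : ℂ) - b) / ((x : ℂ) - a) = (((x - b) / (x - a) : ℝ) : ℂ) := by push_cast; rfl
  rw [e, ← Complex.ofReal_log h.le, Real.sqrt_eq_rpow, Real.rpow_def_of_pos h]
  push_cast
  ring_nf

lemma harmExt_eq {a b x : ℝ} (hab : a < b) (hx : OffI a b x) (u : ℝ → ℝ) :
    harmExt a b u (x : ℂ) = Wr a b x * ∫ t, u t / (x - t) ∂(arcsineMeasure a b) := by
  unfold harmExt cauchyT
  rw [wBranch_real hab hx]
  have : ∀ t : ℝ, (u t : ℂ) / ((x : ℂ) - (t : ℂ)) = ((u t / (x - t) : ℝ) : ℂ) := by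
    intro t; push_cast; rfl
  simp_rw [this]
  rw [integral_complex_ofReal, ← Complex.ofReal_mul, Complex.ofReal_re]

/-- Möbius coordinate sending `a ↦ -1`, `b ↦ 1`. -/
def mobS (a b x t : ℝ) : ℝ := ((t - a) * (x - b) - (b - t) * (x - a)) / ((b - a) * (x - t))

lemma mobS_deriv {a b x t : ℝ} (hab : a < b) (hx : OffI a b x) (ht : t ∈ Set.Icc a b) :
    HasDerivAt (mobS a b x) (2 * ((x - a) * (x - b)) / ((b - a) * (x - t) ^ 2)) t := by
  have h1 : x - t ≠ 0 := sub_ne_of_off hx ht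
  have h2 : b - a ≠ 0 := by linarith
  have hid := hasDerivAt_id t
  have hn : HasDerivAt (fun t => (t - a) * (x - b) - (b - t) * (x - a))
      (1 * (x - b) - (-1) * (x - a)) t :=
    ((hid.sub_const a).mul_const (x - b)).sub ((hid.const_sub b).mul_const (x - a))
  have hd : HasDerivAt (fun t => (b - a) * (x - t)) ((b - a) * (-1)) t :=
    (hid.const_sub x).const_mul (b - a)
  have := hn.div hd (mul_ne_zero h2 h1)
  refine this.congr_deriv ?_
  field_simp
  ring

lemma mobS_one_sub {a b x t : ℝ} (hab : a < b) (hx : OffI a b x) (ht : t ∈ Set.Icc a b) :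
    1 - mobS a b x t ^ 2 = (2 * Wr a b x / ((b - a) * (x - t))) ^ 2 * ((t - a) * (b - t)) := by
  have h1 : x - t ≠ 0 := sub_ne_of_off hx ht
  have h2 : b - a ≠ 0 := by linarith
  rw [div_pow, mul_pow, Wr_sq hab hx]
  unfold mobS
  field_simp
  ring

lemma arcsin_deriv {a b x t : ℝ} (hab : a < b) (hx : OffI a b x) (ht : t ∈ Set.Ioo a b) :
    HasDerivAt (fun t => Real.arcsin (mobS a b x t) / Real.pi)
      (rhoD a b t * (Wr a b x / (x - t))) t := by
  have ht' : t ∈ Set.Icc a b := ⟨ht.1.le, ht.2.le⟩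
  have h1 : x - t ≠ 0 := sub_ne_of_off hx ht'
  have h2 : 0 < b - a := by linarith
  have h3 : 0 < (t - a) * (b - t) := mul_pos (by linarith [ht.1]) (by linarith [ht.2])
  have hW := Wr_div_pos hab hx ht'
  have hWn := Wr_ne hab hx
  have h4 := mobS_one_sub hab hx ht'
  have h5 : 0 < 1 - mobS a b x t ^ 2 := by
    rw [h4]; apply mul_pos _ h3
    apply sq_pos_of_ne_zero
    exact div_ne_zero (mul_ne_zero two_ne_zero hWn) (mul_ne_zero h2.ne' h1)
  have hm1 : mobS a b x t ≠ -1 := by intro h; rw [h] at h5; norm_num at h5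
  have hp1 : mobS a b x t ≠ 1 := by intro h; rw [h] at h5; norm_num at h5
  have := ((Real.hasDerivAt_arcsin hm1 hp1).comp t (mobS_deriv hab hx ht')).div_const Real.pi
  refine this.congr_deriv ?_
  have h6 : Real.sqrt (1 - mobS a b x t ^ 2) =
      (2 * Wr a b x / ((b - a) * (x - t))) * Real.sqrt ((t - a) * (b - t)) := by
    rw [h4, Real.sqrt_mul (sq_nonneg _), Real.sqrt_sq]
    have : 2 * Wr a b x / ((b - a) * (x - t)) = 2 / (b - a) * (Wr a b x / (x - t)) := by
      field_simp
    rw [this]; positivity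
  have h7 := Real.sqrt_pos.2 h3
  rw [h6, ← Wr_sq hab hx]
  unfold rhoD
  have := Real.pi_pos
  field_simp

lemma mobS_a {a b x : ℝ} (hab : a < b) (hx : OffI a b x) : mobS a b x a = -1 := by
  have h1 : x - a ≠ 0 := sub_ne_of_off hx ⟨le_rfl, hab.le⟩
  have h2 : b - a ≠ 0 := by linarith
  unfold mobS
  field_simp
  ring

lemma mobS_b {a b x : ℝ} (hab : a < b) (hx : OffI a b x) : mobS a b x b = 1 := by
  have h1 : x - b ≠ 0 := sub_ne_of_off hx ⟨hab.le, le_rfl⟩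
  have h2 : b - a ≠ 0 := by linarith
  unfold mobS
  field_simp
  ring

lemma kern_integrable' {a b x : ℝ} (hab : a < b) (hx : OffI a b x) :
    IntervalIntegrable (fun t => rhoD a b t * (Wr a b x / (x - t))) volume a b := by
  rw [intervalIntegrable_iff_integrableOn_Ioc_of_le hab.le]
  refine intervalIntegral.integrableOn_deriv_of_nonneg
    (g := fun t => Real.arcsin (mobS a b x t) / Real.pi) ?_
    (fun t ht => arcsin_deriv hab hx ht) ?_
  · refine ContinuousOn.div_const ?_ _
    exact Real.continuous_arcsin.comp_continuousOn
      fun t ht => (mobS_deriv hab hx ht).continuousAt.continuousWithinAt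
  · intro t ht
    exact mul_nonneg (rhoD_nonneg _ _ _) (Wr_div_pos hab hx ⟨ht.1.le, ht.2.le⟩).le

lemma kern_integral {a b x : ℝ} (hab : a < b) (hx : OffI a b x) :
    ∫ t, Wr a b x / (x - t) ∂(arcsineMeasure a b) = 1 := by
  rw [arc_integral hab, intervalIntegral.integral_eq_sub_of_hasDerivAt_of_le hab.le
    (f := fun t => Real.arcsin (mobS a b x t) / Real.pi) ?_
    (fun t ht => arcsin_deriv hab hx ht) (kern_integrable' hab hx)]
  · simp only [mobS_a hab hx, mobS_b hab hx, Real.arcsin_one, Real.arcsin_neg_one]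
    have := Real.pi_pos
    field_simp
    norm_num
  · refine ContinuousOn.div_const ?_ _
    exact Real.continuous_arcsin.comp_continuousOn
      fun t ht => (mobS_deriv hab hx ht).continuousAt.continuousWithinAt

lemma kern_integrable {a b x : ℝ} (hab : a < b) (hx : OffI a b x) :
    Integrable (fun t => Wr a b x / (x - t)) (arcsineMeasure a b) :=
  (arc_integrable hab _).2 (kern_integrable' hab hx)

lemma arc_finite {a b : ℝ} (hab : a < b) : IsFiniteMeasure (arcsineMeasure a b) := by
  have hx : OffI a b (b + 1) := Or.inr (by linarith)
  have h := kern_integrable hab hx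
  have hW : 0 < Wr a b (b + 1) := by
    have := Wr_div_pos hab hx (t := b) ⟨hab.le, le_rfl⟩
    simpa using this
  have : Integrable (fun _ : ℝ => (1 : ℝ)) (arcsineMeasure a b) := by
    refine Integrable.mono' (h.const_mul ((b + 1 - a) / Wr a b (b + 1))) aestronglyMeasurable_const ?_
    filter_upwards [arc_ae a b] with t ht
    have h1 : 0 < b + 1 - t := by linarith [ht.2]
    rw [norm_one, div_mul_div_cancel₀ hW.ne', le_div_iff₀ h1]
    linarith [ht.1]
  rwa [integrable_const_iff_isFiniteMeasure one_ne_zero] at this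

/-- Functions continuous on `[a,b]` are integrable for the arcsine law. -/
lemma arc_int_cont {a b : ℝ} (hab : a < b) {f : ℝ → ℝ} (hf : ContinuousOn f (Set.Icc a b)) :
    Integrable f (arcsineMeasure a b) := by
  have := arc_finite hab
  obtain ⟨C, hC⟩ := isCompact_Icc.exists_bound_of_continuousOn hf
  refine Integrable.of_bound (arc_meas hf) C ?_
  filter_upwards [arc_ae a b] with t ht using hC t ht

lemma cont_div_pow {a b x : ℝ} (hx : OffI a b x) {u : ℝ → ℝ}
    (hu : ContinuousOn u (Set.Icc a b)) (n : ℕ) :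
    ContinuousOn (fun t => u t / (x - t) ^ n) (Set.Icc a b) :=
  hu.div (by fun_prop) fun _ ht => pow_ne_zero _ (sub_ne_of_off hx ht)

/-- Moments of the Cauchy kernel. -/
def Jn (a b : ℝ) (n : ℕ) (u : ℝ → ℝ) (x : ℝ) : ℝ := ∫ t, u t / (x - t) ^ n ∂(arcsineMeasure a b)

lemma off_open (a b : ℝ) : IsOpen {x | OffI a b x} := by
  have : {x | OffI a b x} = Set.Iio a ∪ Set.Ioi b := by ext x; simp [OffI]
  rw [this]; exact isOpen_Iio.union isOpen_Ioi

lemma Jn_deriv {a b x : ℝ} (hab : a < b) (hx : OffI a b x) {u : ℝ → ℝ}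
    (hu : ContinuousOn u (Set.Icc a b)) (n : ℕ) :
    HasDerivAt (Jn a b n u) (-(n : ℝ) * Jn a b (n + 1) u x) x := by
  have := arc_finite hab
  obtain ⟨C, hC⟩ := isCompact_Icc.exists_bound_of_continuousOn hu
  obtain ⟨δ, hδ, hδx⟩ : ∃ δ > 0, ∀ t ∈ Set.Icc a b, δ ≤ |x - t| := by
    rcases hx with h | h
    · refine ⟨a - x, by linarith, fun t ht => ?_⟩
      rw [abs_sub_comm]; exact le_trans (by linarith [ht.1]) (le_abs_self _)
    · refine ⟨x - b, by linarith, fun t ht => ?_⟩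
      exact le_trans (by linarith [ht.2]) (le_abs_self _)
  have hball : ∀ y ∈ Metric.ball x (δ / 2), ∀ t ∈ Set.Icc a b, δ / 2 ≤ |y - t| := by
    intro y hy t ht
    rw [Metric.mem_ball, Real.dist_eq, abs_sub_comm] at hy
    have := abs_sub_le x y t
    linarith [hδx t ht]
  have hbne : ∀ y ∈ Metric.ball x (δ / 2), ∀ t ∈ Set.Icc a b, y - t ≠ 0 := by
    intro y hy t ht h0
    have := hball y hy t ht
    rw [h0, abs_zero] at this; linarith
  have key := hasDerivAt_integral_of_dominated_loc_of_deriv_le (μ := arcsineMeasure a b)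
    (F := fun x t => u t / (x - t) ^ n) (F' := fun x t => -(n : ℝ) * (u t / (x - t) ^ (n + 1)))
    (bound := fun _ => (n : ℝ) * (C / (δ / 2) ^ (n + 1))) (x₀ := x) (s := Metric.ball x (δ / 2))
    (Metric.ball_mem_nhds x (by linarith)) ?_ ?_ ?_ ?_ ?_ ?_
  · refine key.2.congr_deriv ?_
    rw [integral_const_mul]; rfl
  · filter_upwards [(off_open a b).mem_nhds hx] with y hy
    exact arc_meas (cont_div_pow hy hu n)
  · exact arc_int_cont hab (cont_div_pow hx hu n)
  · exact (arc_meas (cont_div_pow hx hu (n + 1))).const_mul _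
  · filter_upwards [arc_ae a b] with t ht y hy
    rw [norm_mul, norm_div, norm_pow, norm_neg, Real.norm_natCast]
    have h1 := hball y hy t ht
    have h2 := hC t ht
    have h3 : 0 ≤ C := le_trans (norm_nonneg _) h2
    rw [Real.norm_eq_abs (y - t)]
    gcongr
  · exact integrable_const _
  · filter_upwards [arc_ae a b] with t ht y hy
    have h0 := hbne y hy t ht
    have h1 : HasDerivAt (fun y : ℝ => (y - t) ^ n) ((n : ℝ) * (y - t) ^ (n - 1) * 1) y :=
      ((hasDerivAt_id y).sub_const t).pow n
    have := (hasDerivAt_const y (u t)).div h1 (pow_ne_zero _ h0)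
    refine this.congr_deriv ?_
    rcases n with _ | n
    · simp
    · simp only [Nat.add_sub_cancel]
      field_simp
      ring

/-! ### The harmonic extension on the real line and its derivative -/

lemma Wr_deriv {a b x : ℝ} (hab : a < b) (hx : OffI a b x) :
    HasDerivAt (Wr a b) ((2 * x - a - b) / (2 * Wr a b x)) x := by
  have h := ratio_pos hab hx
  have h1 : x - a ≠ 0 := sub_ne_of_off hx ⟨le_rfl, hab.le⟩
  have hid := hasDerivAt_id x
  have hq := ((hid.sub_const b).div (hid.sub_const a) h1)
  have := (hid.sub_const a).mul (hq.sqrt h.ne')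
  refine this.congr_deriv ?_
  have hs := Real.sqrt_pos.2 h
  have hsq := Real.sq_sqrt h.le
  simp only [id, Pi.div_apply]
  unfold Wr
  rw [eq_div_iff (by positivity)] at hsq
  field_simp
  linear_combination 2 * hsq

def hR (a b : ℝ) (u : ℝ → ℝ) (x : ℝ) : ℝ := Wr a b x * Jn a b 1 u x

def hD (a b : ℝ) (u : ℝ → ℝ) (x : ℝ) : ℝ :=
  (2 * x - a - b) / (2 * Wr a b x) * Jn a b 1 u x - Wr a b x * Jn a b 2 u x

lemma harmExt_hR {a b x : ℝ} (hab : a < b) (hx : OffI a b x) (u : ℝ → ℝ) :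
    harmExt a b u (x : ℂ) = hR a b u x := by
  rw [harmExt_eq hab hx]; simp [hR, Jn]

lemma hR_deriv {a b x : ℝ} (hab : a < b) (hx : OffI a b x) {u : ℝ → ℝ}
    (hu : ContinuousOn u (Set.Icc a b)) : HasDerivAt (hR a b u) (hD a b u x) x := by
  have := (Wr_deriv hab hx).mul (Jn_deriv hab hx hu 1)
  refine this.congr_deriv ?_
  unfold hD
  push_cast
  ring

lemma harmExt_deriv {a b x : ℝ} (hab : a < b) (hx : OffI a b x) {u : ℝ → ℝ}
    (hu : ContinuousOn u (Set.Icc a b)) :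
    HasDerivAt (fun x : ℝ => harmExt a b u (x : ℂ)) (hD a b u x) x := by
  refine (hR_deriv hab hx hu).congr_of_eventuallyEq ?_
  filter_upwards [(off_open a b).mem_nhds hx] with y hy using harmExt_hR hab hy u

lemma hD_cont {a b x : ℝ} (hab : a < b) (hx : OffI a b x) {u : ℝ → ℝ}
    (hu : ContinuousOn u (Set.Icc a b)) : ContinuousAt (hD a b u) x := by
  have h1 := (Wr_deriv hab hx).continuousAt
  have h2 := (Jn_deriv hab hx hu 1).continuousAt
  have h3 := (Jn_deriv hab hx hu 2).continuousAt
  unfold hD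
  refine ContinuousAt.sub (ContinuousAt.mul (ContinuousAt.div (by fun_prop) (by fun_prop) ?_) h2)
    (h1.mul h3)
  exact mul_ne_zero two_ne_zero (Wr_ne hab hx)

lemma Jn_congr {a b x : ℝ} {u v : ℝ → ℝ} (h : ∀ t ∈ Set.Icc a b, u t = v t) (n : ℕ) :
    Jn a b n u x = Jn a b n v x := by
  unfold Jn
  refine integral_congr_ae ?_
  filter_upwards [arc_ae a b] with t ht
  rw [h t ht]

lemma hR_congr {a b x : ℝ} {u v : ℝ → ℝ} (h : ∀ t ∈ Set.Icc a b, u t = v t) :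
    hR a b u x = hR a b v x := by
  unfold hR; rw [Jn_congr h]

lemma Jn_add {a b x : ℝ} (hab : a < b) (hx : OffI a b x) {u v : ℝ → ℝ}
    (hu : ContinuousOn u (Set.Icc a b)) (hv : ContinuousOn v (Set.Icc a b)) (n : ℕ) :
    Jn a b n (fun t => u t + v t) x = Jn a b n u x + Jn a b n v x := by
  unfold Jn
  rw [← integral_add (arc_int_cont hab (cont_div_pow hx hu n))
    (arc_int_cont hab (cont_div_pow hx hv n))]
  simp only [add_div]

lemma hR_add {a b x : ℝ} (hab : a < b) (hx : OffI a b x) {u v : ℝ → ℝ}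
    (hu : ContinuousOn u (Set.Icc a b)) (hv : ContinuousOn v (Set.Icc a b)) :
    hR a b (fun t => u t + v t) x = hR a b u x + hR a b v x := by
  unfold hR; rw [Jn_add hab hx hu hv]; ring

lemma hD_add {a b x : ℝ} (hab : a < b) (hx : OffI a b x) {u v : ℝ → ℝ}
    (hu : ContinuousOn u (Set.Icc a b)) (hv : ContinuousOn v (Set.Icc a b)) :
    hD a b (fun t => u t + v t) x = hD a b u x + hD a b v x := by
  unfold hD; rw [Jn_add hab hx hu hv, Jn_add hab hx hu hv]; ring

lemma hD_congr {a b x : ℝ} {u v : ℝ → ℝ} (h : ∀ t ∈ Set.Icc a b, u t = v t) :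
    hD a b u x = hD a b v x := by
  unfold hD; rw [Jn_congr h, Jn_congr h]

lemma hR_smul {a b x : ℝ} (c : ℝ) (u : ℝ → ℝ) :
    hR a b (fun t => c * u t) x = c * hR a b u x := by
  unfold hR Jn
  simp only [mul_div_assoc]
  rw [integral_const_mul]; ring

lemma hR_const {a b x : ℝ} (hab : a < b) (hx : OffI a b x) (c : ℝ) :
    hR a b (fun _ => c) x = c := by
  have := kern_integral hab hx
  unfold hR Jn
  rw [← integral_const_mul]
  have e : (fun t => Wr a b x * (c / (x - t) ^ 1)) = fun t => c * (Wr a b x / (x - t)) := by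
    ext t; rw [pow_one]; ring
  rw [e, integral_const_mul, this, mul_one]

lemma kern_weight_bound {a b x : ℝ} (hab : a < b) (hx : OffI a b x) {g : ℝ → ℝ} {M : ℝ}
    (hM : ∀ t ∈ Set.Icc a b, |g t| ≤ M) :
    |∫ t, (Wr a b x / (x - t)) * g t ∂(arcsineMeasure a b)| ≤ M := by
  have h1 := kern_integral hab hx
  have : ‖∫ t, (Wr a b x / (x - t)) * g t ∂(arcsineMeasure a b)‖ ≤
      ∫ t, (Wr a b x / (x - t)) * M ∂(arcsineMeasure a b) := by
    refine norm_integral_le_of_norm_le ((kern_integrable hab hx).mul_const M) ?_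
    filter_upwards [arc_ae a b] with t ht
    have := Wr_div_pos hab hx ht
    rw [norm_mul, Real.norm_eq_abs, Real.norm_eq_abs, abs_of_pos this]
    exact mul_le_mul_of_nonneg_left (hM t ht) this.le
  rwa [integral_mul_const, h1, one_mul, Real.norm_eq_abs] at this

lemma hR_bound {a b x : ℝ} (hab : a < b) (hx : OffI a b x) {u : ℝ → ℝ} {M : ℝ}
    (hM : ∀ t ∈ Set.Icc a b, |u t| ≤ M) : |hR a b u x| ≤ M := by
  have := kern_weight_bound hab hx hM
  unfold hR Jn
  rw [← integral_const_mul]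
  have e : (fun t => Wr a b x * (u t / (x - t) ^ 1)) = fun t => Wr a b x / (x - t) * u t := by
    ext t; rw [pow_one]; ring
  rw [e]; exact this

lemma hD_bound {a b x : ℝ} (hab : a < b) (hx : OffI a b x) {u : ℝ → ℝ} {M δ : ℝ} (hδ : 0 < δ)
    (hd : ∀ t ∈ Set.Icc a b, δ ≤ |x - t|)
    (hM : ∀ t ∈ Set.Icc a b, |u t| ≤ M) : |hD a b u x| ≤ 2 * M / δ := by
  have hM0 : 0 ≤ M := le_trans (abs_nonneg _) (hM a ⟨le_rfl, hab.le⟩)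
  have hW := Wr_ne hab hx
  have hW2 := Wr_sq hab hx
  have ha : x - a ≠ 0 := sub_ne_of_off hx ⟨le_rfl, hab.le⟩
  have hb : x - b ≠ 0 := sub_ne_of_off hx ⟨hab.le, le_rfl⟩
  have e1 : (2 * x - a - b) / (2 * Wr a b x) * Jn a b 1 u x =
      (1 / (x - a) + 1 / (x - b)) / 2 * hR a b u x := by
    unfold hR
    have : (1 / (x - a) + 1 / (x - b)) = (2 * x - a - b) / Wr a b x ^ 2 := by
      rw [hW2]; field_simp; ring
    rw [this]; field_simp
  have e2 : Wr a b x * Jn a b 2 u x =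
      ∫ t, (Wr a b x / (x - t)) * (u t / (x - t)) ∂(arcsineMeasure a b) := by
    unfold Jn
    rw [← integral_const_mul]
    congr 1; ext t
    rw [div_mul_div_comm, ← sq, mul_div_assoc]
  have hb1 := hR_bound hab hx hM
  have hb2 : |Wr a b x * Jn a b 2 u x| ≤ M / δ := by
    rw [e2]
    refine kern_weight_bound hab hx fun t ht => ?_
    rw [abs_div]
    exact div_le_div₀ hM0 (hM t ht) hδ (hd t ht)
  have hb3 : |(1 / (x - a) + 1 / (x - b)) / 2| ≤ 1 / δ := by
    have p1 : |1 / (x - a)| ≤ 1 / δ := by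
      rw [abs_div, abs_one]; exact one_div_le_one_div_of_le hδ (hd a ⟨le_rfl, hab.le⟩)
    have p2 : |1 / (x - b)| ≤ 1 / δ := by
      rw [abs_div, abs_one]; exact one_div_le_one_div_of_le hδ (hd b ⟨hab.le, le_rfl⟩)
    rw [abs_div, abs_of_pos (two_pos : (0:ℝ) < 2)]
    have := abs_add_le (1 / (x - a)) (1 / (x - b))
    linarith
  unfold hD
  rw [e1]
  refine (abs_sub _ _).trans ?_
  rw [abs_mul]
  have : |(1 / (x - a) + 1 / (x - b)) / 2| * |hR a b u x| ≤ 1 / δ * M :=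
    mul_le_mul hb3 hb1 (abs_nonneg _) (by positivity)
  calc _ ≤ 1 / δ * M + M / δ := add_le_add this hb2
    _ = 2 * M / δ := by ring

/-- The key estimate: if `|u'| ≤ m (b-a)/((t-a)(b-t))` on `(a,b)` then
`|(H u)'(x)| ≤ m (b-a)/((x-a)(x-b))` off `[a,b]`. -/
lemma hD_key {a b x : ℝ} (hab : a < b) (hx : OffI a b x) {u u' : ℝ → ℝ} {m : ℝ}
    (hu : ContinuousOn u (Set.Icc a b)) (hu' : ContinuousOn u' (Set.Icc a b))
    (hd : ∀ t ∈ Set.Ioo a b, HasDerivAt u (u' t) t)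
    (hm : ∀ t ∈ Set.Ioo a b, |u' t| * ((t - a) * (b - t)) ≤ m * (b - a)) :
    |hD a b u x| ≤ m * ((b - a) / ((x - a) * (x - b))) := by
  have hW := Wr_ne hab hx
  have hW2 := Wr_sq hab hx
  have hpi := Real.pi_pos
  set Φ : ℝ → ℝ := fun t => Real.sqrt ((t - a) * (b - t)) / (Real.pi * Wr a b x * (x - t)) with hΦ
  set Φ' : ℝ → ℝ := fun t => rhoD a b t *
    ((2 * x - a - b) / (2 * Wr a b x) * (1 / (x - t) ^ 1) - Wr a b x * (1 / (x - t) ^ 2)) with hΦ'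
  have hΦc : ContinuousOn Φ (Set.Icc a b) := by
    refine ContinuousOn.div (by fun_prop) (by fun_prop) fun t ht => ?_
    exact mul_ne_zero (mul_ne_zero hpi.ne' hW) (sub_ne_of_off hx ht)
  have hΦd : ∀ t ∈ Set.Ioo a b, HasDerivAt Φ (Φ' t) t := by
    intro t ht
    have h1 : x - t ≠ 0 := sub_ne_of_off hx ⟨ht.1.le, ht.2.le⟩
    have h3 : 0 < (t - a) * (b - t) := mul_pos (by linarith [ht.1]) (by linarith [ht.2])
    have h4 := Real.sqrt_pos.2 h3
    have h5 := Real.sq_sqrt h3.le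
    have hid := hasDerivAt_id t
    have hn := ((hid.sub_const a).mul (hid.const_sub b)).sqrt h3.ne'
    have hdn := (hid.const_sub x).const_mul (Real.pi * Wr a b x)
    have := hn.div hdn (mul_ne_zero (mul_ne_zero hpi.ne' hW) h1)
    refine this.congr_deriv ?_
    simp only [hΦ', rhoD, id, Pi.mul_apply]
    have h4' : Real.sqrt ((t - a) * (b - t)) ≠ 0 := h4.ne'
    generalize Real.sqrt ((t - a) * (b - t)) = s at h4 h4' h5 ⊢
    field_simp
    rw [h5, hW2]
    ring
  have hint1 : IntervalIntegrable (fun t => Φ' t * u t) volume a b := by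
    have c1 := ((arc_int_cont hab (cont_div_pow hx hu 1)).const_mul
      ((2 * x - a - b) / (2 * Wr a b x))).sub
      ((arc_int_cont hab (cont_div_pow hx hu 2)).const_mul (Wr a b x))
    refine ((arc_integrable hab _).1 c1).congr ?_
    intro t _
    simp only [hΦ', Pi.sub_apply]
    ring
  have hhD : hD a b u x = ∫ t in a..b, Φ' t * u t := by
    unfold hD Jn
    rw [← integral_const_mul, ← integral_const_mul, ← integral_sub
      ((arc_int_cont hab (cont_div_pow hx hu 1)).const_mul _)
      ((arc_int_cont hab (cont_div_pow hx hu 2)).const_mul _), arc_integral hab]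
    congr 1; ext t
    simp only [hΦ']
    ring
  have hint2 : IntervalIntegrable (fun t => Φ t * u' t) volume a b := by
    refine ContinuousOn.intervalIntegrable ?_
    rw [Set.uIcc_of_le hab.le]
    exact hΦc.mul hu'
  have hftc : ∫ t in a..b, (Φ' t * u t + Φ t * u' t) = 0 := by
    rw [intervalIntegral.integral_eq_sub_of_hasDerivAt_of_le hab.le (hΦc.mul hu)
      (fun t ht => (hΦd t ht).mul (hd t ht)) (hint1.add hint2)]
    simp [hΦ]
  rw [intervalIntegral.integral_add hint1 hint2] at hftc
  have heq : hD a b u x = -∫ t in a..b, Φ t * u' t := by rw [hhD]; linarith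
  rw [heq, abs_neg]
  have hbd : ‖∫ t in a..b, Φ t * u' t‖ ≤
      ∫ t in a..b, m * (b - a) / Wr a b x ^ 2 * (rhoD a b t * (Wr a b x / (x - t))) := by
    refine intervalIntegral.norm_integral_le_of_norm_le hab.le ?_
      ((kern_integrable' hab hx).const_mul _)
    refine Filter.Eventually.of_forall fun t ht => ?_
    rcases eq_or_lt_of_le ht.2 with h | h
    · simp [hΦ, rhoD, h]
    · have ht' : t ∈ Set.Ioo a b := ⟨ht.1, h⟩
      have h1 : x - t ≠ 0 := sub_ne_of_off hx ⟨ht.1.le, ht.2⟩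
      have hk := Wr_div_pos hab hx (t := t) ⟨ht.1.le, ht.2⟩
      have h3 : 0 < (t - a) * (b - t) := mul_pos (by linarith [ht'.1]) (by linarith [ht'.2])
      have h4 := Real.sqrt_pos.2 h3
      have h5 := Real.sq_sqrt h3.le
      have hm' := hm t ht'
      have hWW : 0 < Wr a b x ^ 2 := by positivity
      have e1 : Φ t = Real.sqrt ((t - a) * (b - t)) * (Wr a b x / (x - t)) /
          (Real.pi * Wr a b x ^ 2) := by
        simp only [hΦ]; field_simp
      have hΦ0 : 0 ≤ Φ t := by rw [e1]; positivity
      rw [norm_mul, Real.norm_eq_abs, Real.norm_eq_abs, abs_of_nonneg hΦ0, e1]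
      rw [← h5] at hm'
      unfold rhoD
      have h6 : Real.sqrt ((t - a) * (b - t)) * (Wr a b x / (x - t)) / (Real.pi * Wr a b x ^ 2)
          * |u' t| = (Wr a b x / (x - t)) / (Real.pi * Wr a b x ^ 2 *
            Real.sqrt ((t - a) * (b - t))) * (|u' t| * Real.sqrt ((t - a) * (b - t)) ^ 2) := by
        generalize Real.sqrt ((t - a) * (b - t)) = s at h4 ⊢
        field_simp
      have h7 : m * (b - a) / Wr a b x ^ 2 * (1 / (Real.pi * Real.sqrt ((t - a) * (b - t))) *
          (Wr a b x / (x - t))) = (Wr a b x / (x - t)) / (Real.pi * Wr a b x ^ 2 *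
            Real.sqrt ((t - a) * (b - t))) * (m * (b - a)) := by
        generalize Real.sqrt ((t - a) * (b - t)) = s at h4 ⊢
        field_simp
      rw [h6, h7]
      exact mul_le_mul_of_nonneg_left hm' (by positivity)
  rw [intervalIntegral.integral_const_mul, ← arc_integral hab, kern_integral hab hx, mul_one,
    hW2] at hbd
  rw [← mul_div_assoc]
  exact hbd

/-! ### Combinatorial inequality for disjoint intervals -/

lemma inv_mem {a b x p : ℝ} (hab : a < b) (hx : OffI a b x)
    (hp : p ∈ Set.Icc (1 / (x - a)) (1 / (x - b))) :
    ∃ s ∈ Set.Icc a b, p = 1 / (x - s) := by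
  rcases hx with h | h
  · have h1 : x - a < 0 := by linarith
    have h2 : x - b < 0 := by linarith
    have hp0 : p < 0 := lt_of_le_of_lt hp.2 (one_div_neg.2 h2)
    have p1 : p * (x - a) ≤ 1 := (div_le_iff_of_neg h1).1 hp.1
    have p2 : 1 ≤ p * (x - b) := (le_div_iff_of_neg h2).1 hp.2
    refine ⟨x - 1 / p, ⟨?_, ?_⟩, ?_⟩
    · have : 1 / p ≤ x - a := (div_le_iff_of_neg hp0).2 (by linarith)
      linarith
    · have : x - b ≤ 1 / p := (le_div_iff_of_neg hp0).2 (by linarith)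
      linarith
    · simp
  · have h1 : 0 < x - a := by linarith
    have h2 : 0 < x - b := by linarith
    have hp0 : 0 < p := lt_of_lt_of_le (one_div_pos.2 h1) hp.1
    have p1 : 1 ≤ p * (x - a) := (div_le_iff₀ h1).1 hp.1
    have p2 : p * (x - b) ≤ 1 := (le_div_iff₀ h2).1 hp.2
    refine ⟨x - 1 / p, ⟨?_, ?_⟩, ?_⟩
    · have : 1 / p ≤ x - a := (div_le_iff₀ hp0).2 (by linarith)
      linarith
    · have : x - b ≤ 1 / p := (le_div_iff₀ hp0).2 (by linarith)
      linarith
    · simp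

lemma len_eq {a b x : ℝ} (hab : a < b) (hx : OffI a b x) :
    1 / (x - b) - 1 / (x - a) = (b - a) / ((x - a) * (x - b)) := by
  have h1 : x - a ≠ 0 := sub_ne_of_off hx ⟨le_rfl, hab.le⟩
  have h2 : x - b ≠ 0 := sub_ne_of_off hx ⟨hab.le, le_rfl⟩
  field_simp
  ring

lemma len_nonneg {a b x : ℝ} (hab : a < b) (hx : OffI a b x) :
    0 ≤ (b - a) / ((x - a) * (x - b)) := by
  rw [← Wr_sq hab hx]
  exact div_nonneg (by linarith) (sq_nonneg _)

lemma sum_len_le {d : ℕ} {A B : Fin d → ℝ} (hAB : ∀ i, A i < B i)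
    (hdisj : ∀ i j, i ≠ j → Disjoint (Set.Icc (A i) (B i)) (Set.Icc (A j) (B j)))
    (i : Fin d) {x : ℝ} (hx : x ∈ Set.Ioo (A i) (B i))
    (hoff : ∀ j ∈ Finset.univ.erase i, OffI (A j) (B j) x) :
    ∑ j ∈ Finset.univ.erase i, (B j - A j) / ((x - A j) * (x - B j)) ≤
      (B i - A i) / ((x - A i) * (B i - x)) := by
  have hxa : 0 < x - A i := by linarith [hx.1]
  have hxb : 0 < B i - x := by linarith [hx.2]
  set I : Fin d → Set ℝ := fun j => Set.Icc (1 / (x - A j)) (1 / (x - B j)) with hI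
  have hvol : ∀ j ∈ Finset.univ.erase i,
      volume (I j) = ENNReal.ofReal ((B j - A j) / ((x - A j) * (x - B j))) := by
    intro j hj
    rw [hI, Real.volume_Icc, len_eq (hAB j) (hoff j hj)]
  have hdis : Set.PairwiseDisjoint (↑(Finset.univ.erase i)) I := by
    intro j hj k hk hjk
    refine Set.disjoint_left.2 fun p hp hp' => ?_
    obtain ⟨s, hs, e⟩ := inv_mem (hAB j) (hoff j hj) hp
    obtain ⟨s', hs', e'⟩ := inv_mem (hAB k) (hoff k hk) hp'
    have : s = s' := by
      rw [e] at e'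
      have := one_div_one_div (x - s)
      rw [e', one_div_one_div] at this
      linarith
    subst this
    exact Set.disjoint_left.1 (hdisj j k hjk) hs hs'
  have hsub : (⋃ j ∈ Finset.univ.erase i, I j) ⊆
      Set.Icc (1 / (x - B i)) (1 / (x - A i)) := by
    refine Set.iUnion₂_subset fun j hj p hp => ?_
    obtain ⟨s, hs, e⟩ := inv_mem (hAB j) (hoff j hj) hp
    have hji : j ≠ i := (Finset.mem_erase.1 hj).1
    have hnot : s ∉ Set.Icc (A i) (B i) := Set.disjoint_left.1 (hdisj j i hji) hs
    have hneg : 1 / (x - B i) ≤ 0 := by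
      apply one_div_nonpos.2; linarith
    have hpos : 0 ≤ 1 / (x - A i) := by positivity
    rcases lt_or_ge s (A i) with h | h
    · have h1 : 0 < x - s := by linarith
      rw [e]
      exact ⟨hneg.trans (by positivity), one_div_le_one_div_of_le hxa (by linarith)⟩
    · have h1 : B i < s := by
        by_contra hc
        exact hnot ⟨h, not_lt.1 hc⟩
      rw [e]
      refine ⟨?_, le_trans (one_div_nonpos.2 (by linarith)) hpos⟩
      exact one_div_le_one_div_of_neg_of_le (by linarith) (by linarith)
  have h1 := measure_mono (μ := volume) hsub
  rw [measure_biUnion_finset hdis (fun j _ => measurableSet_Icc), Finset.sum_congr rfl hvol,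
    ← ENNReal.ofReal_sum_of_nonneg (fun j hj => len_nonneg (hAB j) (hoff j hj)),
    Real.volume_Icc] at h1
  have e : 1 / (x - A i) - 1 / (x - B i) = (B i - A i) / ((x - A i) * (B i - x)) := by
    have : x - B i ≠ 0 := by linarith
    rw [show x - B i = -(B i - x) by ring]
    field_simp
    ring
  rw [e] at h1
  exact (ENNReal.ofReal_le_ofReal_iff (by
    apply div_nonneg _ (by positivity); linarith [hAB i])).1 h1

/-! ### The operator and its derivative -/

def calHD (d : ℕ) (A B : Fin d → ℝ) (u : Fin d → ℝ → ℝ) (i : Fin d) (x : ℝ) : ℝ :=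
  -(1 / 2) * ∑ j ∈ Finset.univ.erase i, hD (A j) (B j) (u j) x

lemma calH_hR {d : ℕ} {A B : Fin d → ℝ} (hAB : ∀ i, A i < B i) (u : Fin d → ℝ → ℝ) {i : Fin d}
    {x : ℝ} (hoff : ∀ j ∈ Finset.univ.erase i, OffI (A j) (B j) x) :
    calH d A B u i x = -(1 / 2) * ∑ j ∈ Finset.univ.erase i, hR (A j) (B j) (u j) x := by
  unfold calH
  rw [Finset.sum_congr rfl fun j hj => harmExt_hR (hAB j) (hoff j hj) (u j)]

lemma calH_deriv {d : ℕ} {A B : Fin d → ℝ} (hAB : ∀ i, A i < B i) {u : Fin d → ℝ → ℝ}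
    (hu : memVecC d A B u) {i : Fin d}
    {x : ℝ} (hoff : ∀ j ∈ Finset.univ.erase i, OffI (A j) (B j) x) :
    HasDerivAt (calH d A B u i) (calHD d A B u i x) x := by
  unfold calHD
  have := (HasDerivAt.fun_sum fun j hj =>
    harmExt_deriv (hAB j) (hoff j hj) (hu j)).const_mul (-(1 / 2) : ℝ)
  exact this

lemma calHD_cont {d : ℕ} {A B : Fin d → ℝ} (hAB : ∀ i, A i < B i) {u : Fin d → ℝ → ℝ}
    (hu : memVecC d A B u) {i : Fin d}
    {x : ℝ} (hoff : ∀ j ∈ Finset.univ.erase i, OffI (A j) (B j) x) :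
    ContinuousAt (calHD d A B u i) x := by
  unfold calHD
  refine ContinuousAt.mul continuousAt_const ?_
  exact tendsto_finsetSum _ fun j hj => hD_cont (hAB j) (hoff j hj) (hu j)

lemma half_sum_le {d : ℕ} (i : Fin d) (f : Fin d → ℝ) {M : ℝ} (hM0 : 0 ≤ M)
    (hf : ∀ j ∈ Finset.univ.erase i, |f j| ≤ M) :
    |-(1 / 2) * ∑ j ∈ Finset.univ.erase i, f j| ≤ d * M / 2 := by
  rw [abs_mul, abs_neg, abs_of_pos (by norm_num : (0:ℝ) < 1 / 2)]
  have h1 := Finset.abs_sum_le_sum_abs f (Finset.univ.erase i)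
  have h2 := Finset.sum_le_card_nsmul _ _ _ hf
  have h3 : (((Finset.univ.erase i).card : ℕ) : ℝ) ≤ d := by
    have := Finset.card_le_univ (Finset.univ.erase i)
    rw [Fintype.card_fin] at this
    exact_mod_cast this
  rw [nsmul_eq_mul] at h2
  have := mul_le_mul_of_nonneg_right h3 hM0
  linarith

lemma calH_bound {d : ℕ} {A B : Fin d → ℝ} (hAB : ∀ i, A i < B i) {u : Fin d → ℝ → ℝ} {i : Fin d}
    {x M : ℝ} (hoff : ∀ j ∈ Finset.univ.erase i, OffI (A j) (B j) x) (hM0 : 0 ≤ M)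
    (hM : ∀ j, ∀ t ∈ Set.Icc (A j) (B j), |u j t| ≤ M) : |calH d A B u i x| ≤ d * M / 2 := by
  rw [calH_hR hAB u hoff]
  exact half_sum_le i _ hM0 fun j hj => hR_bound (hAB j) (hoff j hj) (hM j)

lemma calHD_bound {d : ℕ} {A B : Fin d → ℝ} (hAB : ∀ i, A i < B i) {u : Fin d → ℝ → ℝ} {i : Fin d}
    {x M δ : ℝ} (hoff : ∀ j ∈ Finset.univ.erase i, OffI (A j) (B j) x) (hM0 : 0 ≤ M) (hδ : 0 < δ)
    (hgap : ∀ j ∈ Finset.univ.erase i, ∀ t ∈ Set.Icc (A j) (B j), δ ≤ |x - t|)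
    (hM : ∀ j, ∀ t ∈ Set.Icc (A j) (B j), |u j t| ≤ M) : |calHD d A B u i x| ≤ d * M / δ := by
  have := half_sum_le i (fun j => hD (A j) (B j) (u j) x) (M := 2 * M / δ) (by positivity)
    fun j hj => hD_bound (hAB j) (hoff j hj) hδ (hgap j hj) (hM j)
  refine this.trans (le_of_eq ?_)
  ring

lemma off_of_gap {a b x δ : ℝ} (hδ : 0 < δ) (h : ∀ t ∈ Set.Icc a b, δ ≤ |x - t|) : OffI a b x := by
  by_contra hc
  unfold OffI at hc
  push Not at hc
  have := h x ⟨hc.1, hc.2⟩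
  simp at this
  linarith

/-! ### A priori estimate -/

def Gap (d : ℕ) (A B : Fin d → ℝ) (δ : ℝ) : Prop :=
  ∀ i j, i ≠ j → ∀ x ∈ Set.Icc (A i) (B i), ∀ t ∈ Set.Icc (A j) (B j), δ ≤ |x - t|

lemma Gap.off {d : ℕ} {A B : Fin d → ℝ} {δ : ℝ} (hδ : 0 < δ) (h : Gap d A B δ)
    {i : Fin d} {x : ℝ} (hx : x ∈ Set.Icc (A i) (B i)) :
    ∀ j ∈ Finset.univ.erase i, OffI (A j) (B j) x := by
  intro j hj
  exact off_of_gap hδ fun t ht => h i j (Finset.mem_erase.1 hj).1.symm x hx t ht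

lemma Gap.disj {d : ℕ} {A B : Fin d → ℝ} {δ : ℝ} (hδ : 0 < δ) (h : Gap d A B δ) :
    ∀ i j, i ≠ j → Disjoint (Set.Icc (A i) (B i)) (Set.Icc (A j) (B j)) := by
  intro i j hij
  refine Set.disjoint_left.2 fun x hx hx' => ?_
  have := h i j hij x hx x hx'
  simp at this
  linarith

section apriori

variable {d : ℕ} {A B : Fin d → ℝ} {δ L s N : ℝ} {u a : Fin d → ℝ → ℝ}

lemma hD_split (hAB : ∀ i, A i < B i) (hδ : 0 < δ) (hgap : Gap d A B δ)
    (hs0 : 0 ≤ s) (hu : memVecC d A B u) (ha : memVecC d A B a)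
    (hN : ∀ i, ∀ x ∈ Set.Icc (A i) (B i), |a i x| ≤ N)
    (heq : ∀ i, ∀ x ∈ Set.Icc (A i) (B i), u i x = s * calH d A B u i x + a i x)
    {q : ℝ}
    (hq : ∀ i, ∀ t ∈ Set.Ioo (A i) (B i),
      |s * calHD d A B u i t| * ((t - A i) * (B i - t)) ≤ q * (B i - A i))
    {i j : Fin d} (hij : i ≠ j) {x : ℝ} (hx : x ∈ Set.Icc (A i) (B i)) :
    |hD (A j) (B j) (u j) x| ≤ 2 * N / δ + q * ((B j - A j) / ((x - A j) * (x - B j))) := by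
  have hoff : OffI (A j) (B j) x := hgap.off hδ hx j (by simp [hij.symm])
  have hder : ∀ t ∈ Set.Icc (A j) (B j),
      HasDerivAt (fun t => s * calH d A B u j t) (s * calHD d A B u j t) t := fun t ht =>
    (calH_deriv hAB hu (hgap.off hδ ht)).const_mul s
  have hc : ContinuousOn (fun t => s * calH d A B u j t) (Set.Icc (A j) (B j)) :=
    fun t ht => (hder t ht).continuousAt.continuousWithinAt
  have hc' : ContinuousOn (fun t => s * calHD d A B u j t) (Set.Icc (A j) (B j)) :=
    fun t ht => (continuousAt_const.mul
      (calHD_cont hAB hu (hgap.off hδ ht))).continuousWithinAt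
  rw [hD_congr (v := fun t => a j t + s * calH d A B u j t)
    (fun t ht => by rw [heq j t ht]; ring), hD_add (hAB j) hoff (ha j) hc]
  refine (abs_add_le _ _).trans (add_le_add ?_ ?_)
  · exact hD_bound (hAB j) hoff hδ (fun t ht => hgap i j hij x hx t ht) (hN j)
  · exact hD_key (hAB j) hoff hc hc' (fun t ht => hder t (Set.Ioo_subset_Icc_self ht)) (hq j)

lemma card_erase_le (i : Fin d) : (((Finset.univ.erase i).card : ℕ) : ℝ) ≤ d := by
  have := Finset.card_le_univ (Finset.univ.erase i)
  rw [Fintype.card_fin] at this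
  exact_mod_cast this

lemma calHD_split (hAB : ∀ i, A i < B i) (hδ : 0 < δ) (hgap : Gap d A B δ)
    (hs0 : 0 ≤ s) (hs1 : s ≤ 1) (hu : memVecC d A B u) (ha : memVecC d A B a) (hN0 : 0 ≤ N)
    (hN : ∀ i, ∀ x ∈ Set.Icc (A i) (B i), |a i x| ≤ N)
    (heq : ∀ i, ∀ x ∈ Set.Icc (A i) (B i), u i x = s * calH d A B u i x + a i x)
    {q : ℝ}
    (hq : ∀ i, ∀ t ∈ Set.Ioo (A i) (B i),
      |s * calHD d A B u i t| * ((t - A i) * (B i - t)) ≤ q * (B i - A i))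
    {i : Fin d} {x : ℝ} (hx : x ∈ Set.Icc (A i) (B i)) :
    |s * calHD d A B u i x| ≤ d * N / δ + q / 2 *
      ∑ j ∈ Finset.univ.erase i, (B j - A j) / ((x - A j) * (x - B j)) := by
  have h1 : |s * calHD d A B u i x| ≤ |calHD d A B u i x| := by
    rw [abs_mul, abs_of_nonneg hs0]
    exact mul_le_of_le_one_left (abs_nonneg _) hs1
  refine h1.trans ?_
  unfold calHD
  rw [abs_mul, abs_neg, abs_of_pos (by norm_num : (0:ℝ) < 1 / 2)]
  have h2 : |∑ j ∈ Finset.univ.erase i, hD (A j) (B j) (u j) x| ≤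
      ∑ j ∈ Finset.univ.erase i,
        (2 * N / δ + q * ((B j - A j) / ((x - A j) * (x - B j)))) :=
    (Finset.abs_sum_le_sum_abs _ _).trans (Finset.sum_le_sum fun j hj =>
      hD_split hAB hδ hgap hs0 hu ha hN heq hq (Finset.mem_erase.1 hj).1.symm hx)
  rw [Finset.sum_add_distrib, Finset.sum_const, nsmul_eq_mul, ← Finset.mul_sum] at h2
  have h3 := mul_le_mul_of_nonneg_right (card_erase_le i) (by positivity : 0 ≤ 2 * N / δ)
  have h4 : (d:ℝ) * (2 * N / δ) = 2 * (d * N / δ) := by ring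
  linarith

lemma weighted_bound (hAB : ∀ i, A i < B i) (hδ : 0 < δ) (hgap : Gap d A B δ)
    (hL : ∀ i, B i - A i ≤ L)
    (hs0 : 0 ≤ s) (hs1 : s ≤ 1) (hu : memVecC d A B u) (ha : memVecC d A B a) (hN0 : 0 ≤ N)
    (hN : ∀ i, ∀ x ∈ Set.Icc (A i) (B i), |a i x| ≤ N)
    (heq : ∀ i, ∀ x ∈ Set.Icc (A i) (B i), u i x = s * calH d A B u i x + a i x) :
    ∀ i, ∀ t ∈ Set.Ioo (A i) (B i),
      |s * calHD d A B u i t| * ((t - A i) * (B i - t)) ≤ (2 * (d * N / δ * L)) * (B i - A i) := by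
  set α := d * N / δ * L with hα
  have hw : ∀ i, ∀ t ∈ Set.Ioo (A i) (B i),
      (t - A i) * (B i - t) ≤ L * (B i - A i) := by
    intro i t ht
    have h1 := ht.1
    have h2 := ht.2
    exact mul_le_mul (by linarith [hL i]) (by linarith) (by linarith) (by linarith [hL i])
  -- an initial finite bound
  obtain ⟨q0, hq0⟩ : ∃ q0 : ℝ, ∀ i, ∀ t ∈ Set.Ioo (A i) (B i),
      |s * calHD d A B u i t| * ((t - A i) * (B i - t)) ≤ q0 * (B i - A i) := by
    have : ∀ i, ∃ M : ℝ, ∀ t ∈ Set.Icc (A i) (B i), |s * calHD d A B u i t| ≤ M := by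
      intro i
      have hc' : ContinuousOn (fun t => s * calHD d A B u i t) (Set.Icc (A i) (B i)) :=
        fun t ht => (continuousAt_const.mul
          (calHD_cont hAB hu (hgap.off hδ ht))).continuousWithinAt
      obtain ⟨M, hM⟩ := isCompact_Icc.exists_bound_of_continuousOn hc'
      exact ⟨M, hM⟩
    choose M hM using this
    refine ⟨(∑ i, |M i|) * L, fun i t ht => ?_⟩
    have h1 := hM i t (Set.Ioo_subset_Icc_self ht)
    have h2 : M i ≤ ∑ i, |M i| := (le_abs_self _).trans
      (Finset.single_le_sum (f := fun i => |M i|) (fun i _ => abs_nonneg _) (Finset.mem_univ i))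
    rw [mul_assoc]
    refine mul_le_mul (h1.trans h2) (hw i t ht) ?_ (Finset.sum_nonneg fun i _ => abs_nonneg _)
    exact mul_nonneg (by linarith [ht.1]) (by linarith [ht.2])
  -- contraction step
  have step : ∀ q : ℝ, (∀ i, ∀ t ∈ Set.Ioo (A i) (B i),
      |s * calHD d A B u i t| * ((t - A i) * (B i - t)) ≤ q * (B i - A i)) →
      ∀ i, ∀ t ∈ Set.Ioo (A i) (B i),
      |s * calHD d A B u i t| * ((t - A i) * (B i - t)) ≤ (α + q / 2) * (B i - A i) := by
    intro q hq i t ht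
    have hp1 : 0 < t - A i := by linarith [ht.1]
    have hp2 : 0 < B i - t := by linarith [ht.2]
    have hp : 0 < (t - A i) * (B i - t) := mul_pos hp1 hp2
    have hq0 : 0 ≤ q := by
      have h := hq i t ht
      have h1 : 0 ≤ |s * calHD d A B u i t| * ((t - A i) * (B i - t)) := by positivity
      exact nonneg_of_mul_nonneg_left (h1.trans h) (by linarith [hAB i])
    have h1 := calHD_split hAB hδ hgap hs0 hs1 hu ha hN0 hN heq hq (Set.Ioo_subset_Icc_self ht)
    have h2 := sum_len_le hAB (hgap.disj hδ) i ht (hgap.off hδ (Set.Ioo_subset_Icc_self ht))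
    have h3 := mul_le_mul_of_nonneg_left h2 (by linarith : 0 ≤ q / 2)
    have h4 := mul_le_mul_of_nonneg_right (h1.trans (add_le_add le_rfl h3)) hp.le
    refine h4.trans ?_
    rw [add_mul, add_mul]
    have h5 : q / 2 * ((B i - A i) / ((t - A i) * (B i - t))) * ((t - A i) * (B i - t)) =
        q / 2 * (B i - A i) := by field_simp
    rw [h5]
    have h6 := mul_le_mul_of_nonneg_left (hw i t ht) (by positivity : 0 ≤ d * N / δ)
    rw [hα]
    linarith
  have iter : ∀ n : ℕ, ∀ i, ∀ t ∈ Set.Ioo (A i) (B i),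
      |s * calHD d A B u i t| * ((t - A i) * (B i - t)) ≤
        (2 * α + (q0 - 2 * α) * (1 / 2) ^ n) * (B i - A i) := by
    intro n
    induction n with
    | zero => simpa using hq0
    | succ n ih =>
      have := step _ ih
      intro i t ht
      refine (this i t ht).trans (le_of_eq ?_)
      rw [pow_succ]; ring
  intro i t ht
  have hlim : Tendsto (fun n : ℕ => (2 * α + (q0 - 2 * α) * (1 / 2) ^ n) * (B i - A i)) atTop
      (𝓝 ((2 * α + (q0 - 2 * α) * 0) * (B i - A i))) := by
    refine Tendsto.mul_const _ (Tendsto.const_add _ (Tendsto.const_mul _ ?_))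
    exact tendsto_pow_atTop_nhds_zero_of_lt_one (by norm_num) (by norm_num)
  have := ge_of_tendsto' hlim fun n => iter n i t ht
  simpa using this

lemma deriv_bound (hAB : ∀ i, A i < B i) (hδ : 0 < δ) (hgap : Gap d A B δ)
    (hL : ∀ i, B i - A i ≤ L)
    (hs0 : 0 ≤ s) (hs1 : s ≤ 1) (hu : memVecC d A B u) (ha : memVecC d A B a) (hN0 : 0 ≤ N)
    (hN : ∀ i, ∀ x ∈ Set.Icc (A i) (B i), |a i x| ≤ N)
    (heq : ∀ i, ∀ x ∈ Set.Icc (A i) (B i), u i x = s * calH d A B u i x + a i x) :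
    ∀ i, ∀ x ∈ Set.Icc (A i) (B i),
      |s * calHD d A B u i x| ≤ (d / δ + d / δ * L * (d * (L / δ ^ 2))) * N := by
  intro i x hx
  have hL0 : 0 ≤ L := by linarith [hAB i, hL i]
  have h1 := calHD_split hAB hδ hgap hs0 hs1 hu ha hN0 hN heq
    (weighted_bound hAB hδ hgap hL hs0 hs1 hu ha hN0 hN heq) hx
  have h2 : ∑ j ∈ Finset.univ.erase i, (B j - A j) / ((x - A j) * (x - B j)) ≤ d * (L / δ ^ 2) := by
    have : ∀ j ∈ Finset.univ.erase i, (B j - A j) / ((x - A j) * (x - B j)) ≤ L / δ ^ 2 := by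
      intro j hj
      have hij := (Finset.mem_erase.1 hj).1.symm
      have g1 := hgap i j hij x hx (A j) ⟨le_rfl, (hAB j).le⟩
      have g2 := hgap i j hij x hx (B j) ⟨(hAB j).le, le_rfl⟩
      have hsq := Wr_sq (hAB j) (hgap.off hδ hx j hj)
      have : δ ^ 2 ≤ (x - A j) * (x - B j) := by
        have h0 : 0 ≤ (x - A j) * (x - B j) := by rw [← hsq]; positivity
        rw [← abs_of_nonneg h0, abs_mul, sq]
        exact mul_le_mul g1 g2 hδ.le (abs_nonneg _)
      exact div_le_div₀ hL0 (hL j) (by positivity) this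
    have h := Finset.sum_le_card_nsmul _ _ _ this
    rw [nsmul_eq_mul] at h
    exact h.trans (mul_le_mul_of_nonneg_right (card_erase_le i) (by positivity))
  have h3 := mul_le_mul_of_nonneg_left h2 (by positivity : 0 ≤ 2 * (d * N / δ * L) / 2)
  refine (h1.trans (add_le_add le_rfl h3)).trans (le_of_eq ?_)
  ring

/-- The constants of the a priori estimate. -/
def K3c (d : ℕ) (δ L : ℝ) : ℝ := (d / δ + d / δ * L * (d * (L / δ ^ 2))) * L
def K4c (d : ℕ) (δ L : ℝ) : ℝ := d * (1 + K3c d δ L) / 2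
def Kap (d : ℕ) (δ L : ℝ) : ℝ := 1 + K3c d δ L + 2 * (1 + d) * K4c d δ L

lemma K3c_nonneg (hδ : 0 < δ) (hL : 0 ≤ L) : 0 ≤ K3c d δ L := by
  unfold K3c; positivity
lemma K4c_nonneg (hδ : 0 < δ) (hL : 0 ≤ L) : 0 ≤ K4c d δ L := by
  have := K3c_nonneg (d := d) hδ hL
  unfold K4c; positivity
lemma Kap_nonneg (hδ : 0 < δ) (hL : 0 ≤ L) : 0 ≤ Kap d δ L := by
  have := K3c_nonneg (d := d) hδ hL
  have := K4c_nonneg (d := d) hδ hL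
  unfold Kap; positivity

lemma osc_bound (hAB : ∀ i, A i < B i) (hδ : 0 < δ) (hgap : Gap d A B δ)
    (hL : ∀ i, B i - A i ≤ L)
    (hs0 : 0 ≤ s) (hs1 : s ≤ 1) (hu : memVecC d A B u) (ha : memVecC d A B a) (hN0 : 0 ≤ N)
    (hN : ∀ i, ∀ x ∈ Set.Icc (A i) (B i), |a i x| ≤ N)
    (heq : ∀ i, ∀ x ∈ Set.Icc (A i) (B i), u i x = s * calH d A B u i x + a i x) :
    ∀ i, ∀ x ∈ Set.Icc (A i) (B i),
      |s * calH d A B u i x - s * calH d A B u i (A i)| ≤ K3c d δ L * N := by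
  intro i x hx
  have hL0 : 0 ≤ L := by linarith [hAB i, hL i]
  have hm := (convex_Icc (A i) (B i)).norm_image_sub_le_of_norm_hasDerivWithin_le
    (f := fun t => s * calH d A B u i t) (f' := fun t => s * calHD d A B u i t)
    (fun t ht => ((calH_deriv hAB hu (hgap.off hδ ht)).const_mul s).hasDerivWithinAt)
    (fun t ht => deriv_bound hAB hδ hgap hL hs0 hs1 hu ha hN0 hN heq i t ht)
    (Set.left_mem_Icc.2 (hAB i).le) hx
  refine hm.trans ?_
  rw [Real.norm_eq_abs, abs_of_nonneg (by linarith [hx.1]), K3c]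
  have : x - A i ≤ L := by linarith [hx.2, hL i]
  have := mul_le_mul_of_nonneg_left this
    (by positivity : 0 ≤ (d / δ + d / δ * L * (d * (L / δ ^ 2))) * N)
  linarith

lemma const_system {c e : Fin d → ℝ} {K : ℝ} (hK : 0 ≤ K) (hs0 : 0 ≤ s) (hs1 : s ≤ 1)
    (h : ∀ i, c i + s / 2 * ∑ j ∈ Finset.univ.erase i, c j = e i)
    (he : ∀ i, |e i| ≤ K) (i : Fin d) : |c i| ≤ 2 * (1 + d) * K := by
  set S := ∑ j, c j with hS
  have hd : (1:ℝ) ≤ d := by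
    have : 0 < d := i.pos
    exact_mod_cast this
  have h1 : ∀ i, (1 - s / 2) * c i + s / 2 * S = e i := by
    intro i
    rw [← h i, hS, ← Finset.add_sum_erase _ _ (Finset.mem_univ i)]; ring
  have h2 : (1 - s / 2 + s / 2 * d) * S = ∑ i, e i := by
    rw [← Finset.sum_congr rfl fun i _ => h1 i, Finset.sum_add_distrib, ← Finset.mul_sum,
      Finset.sum_const, Finset.card_univ, Fintype.card_fin, nsmul_eq_mul]
    ring
  have h3 : |∑ i, e i| ≤ d * K := by
    refine (Finset.abs_sum_le_sum_abs _ _).trans ?_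
    have := Finset.sum_le_card_nsmul Finset.univ (fun i => |e i|) K (fun i _ => he i)
    simpa using this
  have hco : 1 ≤ 1 - s / 2 + s / 2 * d := by nlinarith
  have h4 : |S| ≤ d * K := by
    rw [← h2, abs_mul, abs_of_pos (by linarith)] at h3
    exact (le_mul_of_one_le_left (abs_nonneg _) hco).trans h3
  have h5 : (1 - s / 2) * c i = e i - s / 2 * S := by linarith [h1 i]
  have h6 : (1 - s / 2) * |c i| ≤ K + d * K := by
    rw [← abs_of_nonneg (by linarith : 0 ≤ 1 - s / 2), ← abs_mul, h5]
    refine (abs_sub _ _).trans (add_le_add (he i) ?_)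
    rw [abs_mul, abs_of_nonneg (by linarith : 0 ≤ s / 2)]
    exact (mul_le_of_le_one_left (abs_nonneg _) (by linarith)).trans h4
  nlinarith [abs_nonneg (c i)]

theorem apriori (hAB : ∀ i, A i < B i) (hδ : 0 < δ) (hgap : Gap d A B δ)
    (hL : ∀ i, B i - A i ≤ L)
    (hs0 : 0 ≤ s) (hs1 : s ≤ 1) (hu : memVecC d A B u) (ha : memVecC d A B a) (hN0 : 0 ≤ N)
    (hN : ∀ i, ∀ x ∈ Set.Icc (A i) (B i), |a i x| ≤ N)
    (heq : ∀ i, ∀ x ∈ Set.Icc (A i) (B i), u i x = s * calH d A B u i x + a i x) :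
    ∀ i, ∀ x ∈ Set.Icc (A i) (B i), |u i x| ≤ Kap d δ L * N := by
  intro i₀ x₀ hx₀
  have hL0 : 0 ≤ L := by linarith [hAB i₀, hL i₀]
  have hosc := osc_bound hAB hδ hgap hL hs0 hs1 hu ha hN0 hN heq
  have hK3 := K3c_nonneg (d := d) hδ hL0
  have hK4 := K4c_nonneg (d := d) hδ hL0
  set c : Fin d → ℝ := fun i => s * calH d A B u i (A i) with hc
  have hdiff : ∀ i, ∀ x ∈ Set.Icc (A i) (B i), |u i x - c i| ≤ (1 + K3c d δ L) * N := by
    intro i x hx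
    have h1 := hosc i x hx
    have h2 := hN i x hx
    have : u i x - c i = a i x + (s * calH d A B u i x - s * calH d A B u i (A i)) := by
      rw [heq i x hx]; simp only [hc]; ring
    rw [this]
    refine (abs_add_le _ _).trans ?_
    linarith
  set e : Fin d → ℝ := fun i => s * (-(1 / 2) * ∑ j ∈ Finset.univ.erase i,
    hR (A j) (B j) (fun t => u j t - c j) (A i)) with he
  have hsys : ∀ i, c i + s / 2 * ∑ j ∈ Finset.univ.erase i, c j = e i := by
    intro i
    have hA : A i ∈ Set.Icc (A i) (B i) := Set.left_mem_Icc.2 (hAB i).le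
    have hoff := hgap.off hδ hA
    have h1 : ∀ j ∈ Finset.univ.erase i, hR (A j) (B j) (u j) (A i) =
        c j + hR (A j) (B j) (fun t => u j t - c j) (A i) := by
      intro j hj
      have h2 := hR_add (hAB j) (hoff j hj) (u := fun _ => c j) (v := fun t => u j t - c j)
        continuousOn_const ((hu j).sub continuousOn_const)
      rw [hR_const (hAB j) (hoff j hj)] at h2
      rw [← h2]
      exact hR_congr fun t _ => by ring
    have h3 : c i = s * (-(1 / 2) * ∑ j ∈ Finset.univ.erase i, hR (A j) (B j) (u j) (A i)) := by
      simp only [hc]; rw [calH_hR hAB u hoff]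
    rw [Finset.sum_congr rfl h1, Finset.sum_add_distrib] at h3
    simp only [he]
    rw [h3]; ring
  have hebd : ∀ i, |e i| ≤ K4c d δ L * N := by
    intro i
    have hA : A i ∈ Set.Icc (A i) (B i) := Set.left_mem_Icc.2 (hAB i).le
    have hoff := hgap.off hδ hA
    have h1 := half_sum_le i (fun j => hR (A j) (B j) (fun t => u j t - c j) (A i))
      (by positivity : 0 ≤ (1 + K3c d δ L) * N)
      (fun j hj => hR_bound (hAB j) (hoff j hj) (hdiff j))
    simp only [he]
    rw [abs_mul, abs_of_nonneg hs0]
    refine (mul_le_of_le_one_left (abs_nonneg _) hs1).trans (h1.trans (le_of_eq ?_))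
    unfold K4c; ring
  have hcb := const_system (by positivity) hs0 hs1 hsys hebd i₀
  have h1 := hdiff i₀ x₀ hx₀
  have h2 : |u i₀ x₀| ≤ |u i₀ x₀ - c i₀| + |c i₀| := by
    have := abs_add_le (u i₀ x₀ - c i₀) (c i₀)
    simpa using this
  unfold Kap
  linarith

end apriori

/-! ### Method of continuity -/

lemma continuity_step {X : Type*} [NormedAddCommGroup X] [NormedSpace ℝ X] [CompleteSpace X]
    (K : X →L[ℝ] X) {C t t' : ℝ} (hC : 0 ≤ C)
    (hap : ∀ x : X, ‖x‖ ≤ C * ‖x - t • K x‖)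
    (hsurj : ∀ y : X, ∃ x, x - t • K x = y)
    (hsmall : C * (|t' - t| * ‖K‖) ≤ 1 / 2) :
    ∀ y : X, ∃ x, x - t' • K x = y := by
  intro y
  choose g hg using hsurj
  have hlip : ∀ y z, ‖g y - g z‖ ≤ C * ‖y - z‖ := by
    intro y z
    have := hap (g y - g z)
    rw [map_sub, smul_sub] at this
    have e : g y - g z - (t • K (g y) - t • K (g z)) = y - z := by
      rw [← hg y, ← hg z, hg, hg]
      nth_rewrite 3 [← hg y]
      nth_rewrite 3 [← hg z]
      abel
    rwa [e] at this
  have hcon : ContractingWith (1 / 2) (fun x => g (y + (t' - t) • K x)) := by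
    refine ⟨by norm_num, LipschitzWith.of_dist_le_mul fun x z => ?_⟩
    rw [dist_eq_norm, dist_eq_norm]
    refine (hlip _ _).trans ?_
    have e : y + (t' - t) • K x - (y + (t' - t) • K z) = (t' - t) • K (x - z) := by
      rw [map_sub, smul_sub]; abel
    rw [e, norm_smul, Real.norm_eq_abs]
    have h1 := K.le_opNorm (x - z)
    have h2 : C * (|t' - t| * ‖K (x - z)‖) ≤ C * (|t' - t| * (‖K‖ * ‖x - z‖)) := by gcongr
    refine h2.trans ?_
    have h3 := mul_le_mul_of_nonneg_right hsmall (norm_nonneg (x - z))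
    push_cast
    linarith
  have : Nonempty X := ⟨0⟩
  have hfix := hcon.fixedPoint_isFixedPt
  set x := ContractingWith.fixedPoint _ hcon
  refine ⟨x, ?_⟩
  have h := hg (y + (t' - t) • K x)
  have hx : g (y + (t' - t) • K x) = x := hfix
  rw [hx] at h
  rw [sub_smul] at h
  have : x - t' • K x = x - t • K x - (t' • K x - t • K x) := by abel
  rw [this, h]; abel

lemma continuity_method {X : Type*} [NormedAddCommGroup X] [NormedSpace ℝ X] [CompleteSpace X]
    (K : X →L[ℝ] X) {C : ℝ} (hC : 0 ≤ C)
    (hap : ∀ t : ℝ, 0 ≤ t → t ≤ 1 → ∀ x : X, ‖x‖ ≤ C * ‖x - t • K x‖) :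
    ∀ y : X, ∃ x, x - K x = y := by
  obtain ⟨n, hn⟩ := exists_nat_gt (2 * (C * ‖K‖))
  have hn0 : (0:ℝ) < n := lt_of_le_of_lt (by positivity) hn
  have key : ∀ k : ℕ, k ≤ n → ∀ y : X, ∃ x, x - ((k:ℝ) / n) • K x = y := by
    intro k
    induction k with
    | zero => intro _ y; exact ⟨y, by simp⟩
    | succ k ih =>
      intro hk
      refine continuity_step K hC (hap _ (by positivity) ?_) (ih (by omega)) ?_
      · rw [div_le_one hn0]
        exact_mod_cast (by omega : k ≤ n)
      · have : ((k + 1 : ℕ) : ℝ) / n - (k:ℝ) / n = 1 / n := by push_cast; field_simp; ring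
        rw [this, abs_of_pos (by positivity)]
        have : C * (1 / n * ‖K‖) = (C * ‖K‖) / n := by ring
        rw [this, div_le_iff₀ hn0]
        linarith
  intro y
  obtain ⟨x, hx⟩ := key n le_rfl y
  rw [div_self hn0.ne', one_smul] at hx
  exact ⟨x, hx⟩

section exist

variable {d : ℕ} {A B : Fin d → ℝ}

def extV (hAB : ∀ i, A i < B i) (u : (i : Fin d) → C(Set.Icc (A i) (B i), ℝ)) :
    Fin d → ℝ → ℝ := fun i => Set.IccExtend (hAB i).le (u i)

lemma extV_mem (hAB : ∀ i, A i < B i) (u : (i : Fin d) → C(Set.Icc (A i) (B i), ℝ)) :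
    memVecC d A B (extV hAB u) := fun i =>
  ((u i).continuous.Icc_extend' (h := (hAB i).le)).continuousOn

lemma extV_apply (hAB : ∀ i, A i < B i) (u : (i : Fin d) → C(Set.Icc (A i) (B i), ℝ))
    (i : Fin d) (x : Set.Icc (A i) (B i)) : extV hAB u i x = u i x := by
  simp [extV]

lemma calH_contOn (hAB : ∀ i, A i < B i) {u : Fin d → ℝ → ℝ}
    (hu : memVecC d A B u) {i : Fin d} {s : Set ℝ}
    (hoff : ∀ x ∈ s, ∀ j ∈ Finset.univ.erase i, OffI (A j) (B j) x) :
    ContinuousOn (calH d A B u i) s :=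
  fun x hx => (calH_deriv hAB hu (hoff x hx)).continuousAt.continuousWithinAt

def calHLin (hAB : ∀ i, A i < B i) {δ : ℝ} (hδ : 0 < δ) (hgap : Gap d A B δ) :
    ((i : Fin d) → C(Set.Icc (A i) (B i), ℝ)) →ₗ[ℝ] ((i : Fin d) → C(Set.Icc (A i) (B i), ℝ)) where
  toFun u i := ⟨fun x => calH d A B (extV hAB u) i x,
    (calH_contOn hAB (extV_mem hAB u) (fun x hx => hgap.off hδ hx)).comp_continuous
      continuous_subtype_val (fun x => x.2)⟩
  map_add' u v := by
    funext i
    ext x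
    have hoff := hgap.off hδ x.2
    simp only [ContinuousMap.coe_mk, Pi.add_apply, ContinuousMap.add_apply]
    rw [calH_hR hAB _ hoff, calH_hR hAB _ hoff, calH_hR hAB _ hoff, ← mul_add,
      ← Finset.sum_add_distrib]
    congr 1
    refine Finset.sum_congr rfl fun j hj => ?_
    rw [← hR_add (hAB j) (hoff j hj) (extV_mem hAB u j) (extV_mem hAB v j)]
    exact hR_congr fun t _ => by simp [extV, Set.IccExtend]
  map_smul' c u := by
    funext i
    ext x
    have hoff := hgap.off hδ x.2
    simp only [ContinuousMap.coe_mk, Pi.smul_apply, ContinuousMap.smul_apply, RingHom.id_apply,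
      smul_eq_mul]
    rw [calH_hR hAB _ hoff, calH_hR hAB _ hoff, mul_left_comm]
    congr 1
    rw [Finset.mul_sum]
    refine Finset.sum_congr rfl fun j hj => ?_
    rw [← hR_smul]
    exact hR_congr fun t _ => by simp [extV, Set.IccExtend]

lemma extV_le (hAB : ∀ i, A i < B i) (u : (i : Fin d) → C(Set.Icc (A i) (B i), ℝ))
    (i : Fin d) : ∀ t ∈ Set.Icc (A i) (B i), |extV hAB u i t| ≤ ‖u‖ := by
  intro t ht
  have := extV_apply hAB u i ⟨t, ht⟩
  simp only at this
  rw [this]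
  exact ((u i).norm_coe_le_norm ⟨t, ht⟩).trans (norm_le_pi_norm u i)

theorem solve_exists (hAB : ∀ i, A i < B i) {δ L : ℝ} (hδ : 0 < δ) (hgap : Gap d A B δ)
    (hL0 : 0 ≤ L) (hL : ∀ i, B i - A i ≤ L) {a : Fin d → ℝ → ℝ} (ha : memVecC d A B a) :
    ∃ u, memVecC d A B u ∧
      ∀ i, ∀ x ∈ Set.Icc (A i) (B i), u i x = calH d A B u i x + a i x := by
  set K : ((i : Fin d) → C(Set.Icc (A i) (B i), ℝ)) →L[ℝ]
      ((i : Fin d) → C(Set.Icc (A i) (B i), ℝ)) :=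
    (calHLin hAB hδ hgap).mkContinuous (d / 2) (fun u => by
      refine (pi_norm_le_iff_of_nonneg (by positivity)).2 fun i => ?_
      refine (ContinuousMap.norm_le _ (by positivity)).2 fun x => ?_
      have := calH_bound hAB (hgap.off hδ x.2) (norm_nonneg u) (extV_le hAB u)
      refine le_trans this (le_of_eq ?_)
      ring) with hK
  have hKa : ∀ u i x, K u i x = calH d A B (extV hAB u) i x := fun u i x => rfl
  have hsurj := continuity_method K (C := Kap d δ L) (Kap_nonneg hδ hL0) (by
    intro t ht0 ht1 u
    have hn : 0 ≤ Kap d δ L * ‖u - t • K u‖ := mul_nonneg (Kap_nonneg hδ hL0) (norm_nonneg _)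
    refine (pi_norm_le_iff_of_nonneg hn).2 fun i => ?_
    refine (ContinuousMap.norm_le _ hn).2 fun x => ?_
    rw [← extV_apply hAB u i x, Real.norm_eq_abs]
    refine apriori hAB hδ hgap hL ht0 ht1 (extV_mem hAB u) (extV_mem hAB (u - t • K u))
      (norm_nonneg _) (extV_le hAB _) ?_ i x x.2
    intro i x hx
    have e1 := extV_apply hAB u i ⟨x, hx⟩
    have e2 := extV_apply hAB (u - t • K u) i ⟨x, hx⟩
    simp only at e1 e2
    rw [e1, e2]
    simp only [Pi.sub_apply, Pi.smul_apply, ContinuousMap.sub_apply, ContinuousMap.smul_apply,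
      hKa, smul_eq_mul]
    ring)
  obtain ⟨u, hu⟩ := hsurj (fun i => ⟨fun x => a i x, (ha i).comp_continuous continuous_subtype_val (fun x => x.2)⟩)
  refine ⟨extV hAB u, extV_mem hAB u, fun i x hx => ?_⟩
  have h := congrArg (fun f => f i ⟨x, hx⟩) hu
  simp only [Pi.sub_apply, ContinuousMap.sub_apply, hKa, ContinuousMap.coe_mk] at h
  have e1 := extV_apply hAB u i ⟨x, hx⟩
  simp only at e1
  rw [e1]
  linarith

end exist

/-! ### Norms -/

lemma supIcc_bdd {a b : ℝ} {f : ℝ → ℝ} (hf : ContinuousOn f (Set.Icc a b)) :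
    BddAbove ((fun x => |f x|) '' Set.Icc a b) :=
  (isCompact_Icc.image_of_continuousOn hf.abs).bddAbove

lemma le_supIcc {a b x : ℝ} {f : ℝ → ℝ} (hf : ContinuousOn f (Set.Icc a b))
    (hx : x ∈ Set.Icc a b) : |f x| ≤ supIcc a b f :=
  le_csSup (supIcc_bdd hf) ⟨x, hx, rfl⟩

lemma supIcc_nonneg {a b : ℝ} {f : ℝ → ℝ} : 0 ≤ supIcc a b f := by
  refine Real.sSup_nonneg ?_
  rintro _ ⟨x, _, rfl⟩
  exact abs_nonneg _

lemma supIcc_le {a b M : ℝ} {f : ℝ → ℝ} (hM : 0 ≤ M) (h : ∀ x ∈ Set.Icc a b, |f x| ≤ M) :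
    supIcc a b f ≤ M := by
  refine Real.sSup_le ?_ hM
  rintro _ ⟨x, hx, rfl⟩
  exact h x hx

lemma le_vecCNorm {d : ℕ} {A B : Fin d → ℝ} {a : Fin d → ℝ → ℝ} (i : Fin d) :
    supIcc (A i) (B i) (a i) ≤ vecCNorm d A B a :=
  Finset.single_le_sum (f := fun i => supIcc (A i) (B i) (a i)) (fun _ _ => supIcc_nonneg)
    (Finset.mem_univ i)

lemma vecCNorm_nonneg {d : ℕ} {A B : Fin d → ℝ} {a : Fin d → ℝ → ℝ} : 0 ≤ vecCNorm d A B a :=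
  Finset.sum_nonneg fun _ _ => supIcc_nonneg

lemma vecCNorm_le_C1 {d : ℕ} {A B : Fin d → ℝ} {a : Fin d → ℝ → ℝ} :
    vecCNorm d A B a ≤ vecC1Norm d A B a :=
  Finset.sum_le_sum fun _ _ => le_add_of_nonneg_right supIcc_nonneg

lemma vecC1Norm_eq {d : ℕ} {A B : Fin d → ℝ} {a : Fin d → ℝ → ℝ} :
    vecC1Norm d A B a = vecCNorm d A B a +
      ∑ i, supIcc (A i) (B i) (derivWithin (a i) (Set.Icc (A i) (B i))) :=
  Finset.sum_add_distrib

/-! ### The general bound -/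

section general

variable {d : ℕ} {A B A' B' : Fin d → ℝ} {δ L : ℝ}

lemma contDiffOn_of_deriv {a b : ℝ} (hab : a < b) {f f' : ℝ → ℝ}
    (h : ∀ x ∈ Set.Icc a b, HasDerivAt f (f' x) x) (hc : ContinuousOn f' (Set.Icc a b)) :
    ContDiffOn ℝ 1 f (Set.Icc a b) := by
  have hd : ∀ x ∈ Set.Icc a b, derivWithin f (Set.Icc a b) x = f' x := fun x hx =>
    (h x hx).hasDerivWithinAt.derivWithin (uniqueDiffOn_Icc hab x hx)
  rw [show (1 : WithTop ℕ∞) = 0 + 1 from rfl, contDiffOn_succ_iff_derivWithin (uniqueDiffOn_Icc hab)]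
  refine ⟨fun x hx => (h x hx).differentiableAt.differentiableWithinAt, by simp, ?_⟩
  rw [contDiffOn_zero]
  exact hc.congr hd

def Kfin (d : ℕ) (δ L : ℝ) : ℝ :=
  1 + d * (1 + d * Kap d δ L / 2) + d * (d * Kap d δ L / δ)

theorem general_bound (hAB : ∀ i, A i < B i) (hAB' : ∀ i, A' i < B' i)
    (hsub : ∀ i, Set.Icc (A i) (B i) ⊆ Set.Icc (A' i) (B' i))
    (hδ : 0 < δ) (hgap' : Gap d A' B' δ) (hL0 : 0 ≤ L) (hL : ∀ i, B i - A i ≤ L) :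
    InvBoundedBy d A B A' B' (memVecC d A' B') (vecCNorm d A' B') (Kfin d δ L) ∧
    InvBoundedBy d A B A' B' (memVecC1 d A' B') (vecC1Norm d A' B') (Kfin d δ L) := by
  have hgap : Gap d A B δ := fun i j hij x hx t ht => hgap' i j hij x (hsub i hx) t (hsub j ht)
  have hK := Kap_nonneg (d := d) hδ hL0
  have hg : ∀ i, ∀ x ∈ Set.Icc (A' i) (B' i), ∀ j ∈ Finset.univ.erase i,
      ∀ t ∈ Set.Icc (A j) (B j), δ ≤ |x - t| := fun i x hx j hj t ht =>
    hgap' i j (Finset.mem_erase.1 hj).1.symm x hx t (hsub j ht)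
  have hoff : ∀ i, ∀ x ∈ Set.Icc (A' i) (B' i), ∀ j ∈ Finset.univ.erase i,
      OffI (A j) (B j) x := fun i x hx j hj => off_of_gap hδ (hg i x hx j hj)
  have hcalH1 : ∀ u, memVecC d A B u → ∀ i,
      ContDiffOn ℝ 1 (calH d A B u i) (Set.Icc (A' i) (B' i)) := by
    intro u hu i
    exact contDiffOn_of_deriv (hAB' i) (fun x hx => calH_deriv hAB hu (hoff i x hx))
      (fun x hx => (calHD_cont hAB hu (hoff i x hx)).continuousWithinAt)
  -- existence
  have hex : ∀ a, memVecC d A' B' a → ∃ w, memVecC d A B w ∧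
      ∀ i, ∀ x ∈ Set.Icc (A' i) (B' i),
        calH d A B w i x + a i x =
          calH d A B (fun i x => calH d A B w i x + a i x) i x + a i x := by
    intro a ha
    obtain ⟨w, hw, hweq⟩ := solve_exists hAB hδ hgap hL0 hL (a := a)
      (fun i => (ha i).mono (hsub i))
    refine ⟨w, hw, fun i x hx => ?_⟩
    rw [calH_hR hAB _ (hoff i x hx), calH_hR hAB _ (hoff i x hx)]
    congr 2
    refine Finset.sum_congr rfl fun j hj => ?_
    exact hR_congr fun t ht => hweq j t ht
  -- bounds
  have hub : ∀ u a, memVecC d A' B' u → memVecC d A' B' a →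
      (∀ i, ∀ x ∈ Set.Icc (A' i) (B' i), u i x = calH d A B u i x + a i x) →
      ∀ i, ∀ x ∈ Set.Icc (A i) (B i), |u i x| ≤ Kap d δ L * vecCNorm d A' B' a := by
    intro u a hu ha heq
    refine apriori hAB hδ hgap hL zero_le_one le_rfl (fun i => (hu i).mono (hsub i))
      (fun i => (ha i).mono (hsub i)) vecCNorm_nonneg
      (fun i x hx => (le_supIcc (ha i) (hsub i hx)).trans (le_vecCNorm i)) ?_
    intro i x hx
    rw [one_mul]
    exact heq i x (hsub i hx)
  have hCb : ∀ u a, memVecC d A' B' u → memVecC d A' B' a →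
      (∀ i, ∀ x ∈ Set.Icc (A' i) (B' i), u i x = calH d A B u i x + a i x) →
      vecCNorm d A' B' u ≤ d * (1 + d * Kap d δ L / 2) * vecCNorm d A' B' a := by
    intro u a hu ha heq
    have hN := vecCNorm_nonneg (A := A') (B := B') (a := a)
    set N := vecCNorm d A' B' a with hNd
    have hb := hub u a hu ha heq
    have : ∀ i ∈ Finset.univ, supIcc (A' i) (B' i) (u i) ≤ (1 + d * Kap d δ L / 2) * N := by
      intro i _
      refine supIcc_le (by positivity) fun x hx => ?_
      rw [heq i x hx]
      have h1 := calH_bound hAB (hoff i x hx) (by positivity) hb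
      have h2 := (le_supIcc (ha i) hx).trans (le_vecCNorm (A := A') (B := B') (a := a) i)
      refine (abs_add_le _ _).trans ?_
      linarith
    have := Finset.sum_le_card_nsmul _ _ _ this
    rw [Finset.card_univ, Fintype.card_fin, nsmul_eq_mul] at this
    rw [mul_assoc]
    exact this
  have hc0 : 0 ≤ (d:ℝ) * (d * Kap d δ L / δ) := by positivity
  refine ⟨⟨?_, ?_⟩, ⟨?_, ?_⟩⟩
  · intro a ha
    obtain ⟨w, hw, h⟩ := hex a ha
    exact ⟨fun i x => calH d A B w i x + a i x,
      fun i => (hcalH1 w hw i).continuousOn.add (ha i), h⟩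
  · intro u a hu ha heq
    refine (hCb u a hu ha heq).trans (mul_le_mul_of_nonneg_right ?_ vecCNorm_nonneg)
    unfold Kfin
    linarith
  · intro a ha
    obtain ⟨w, hw, h⟩ := hex a (fun i => (ha i).continuousOn)
    exact ⟨fun i x => calH d A B w i x + a i x, fun i => (hcalH1 w hw i).add (ha i), h⟩
  · intro u a hu ha heq
    have hu0 : memVecC d A' B' u := fun i => (hu i).continuousOn
    have ha0 : memVecC d A' B' a := fun i => (ha i).continuousOn
    have h1 := hCb u a hu0 ha0 heq
    have hb := hub u a hu0 ha0 heq
    have hN := vecCNorm_nonneg (A := A') (B := B') (a := a)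
    have hN1 := vecCNorm_le_C1 (A := A') (B := B') (a := a)
    have huA : memVecC d A B u := fun i => (hu0 i).mono (hsub i)
    have hder : ∀ i ∈ Finset.univ,
        supIcc (A' i) (B' i) (derivWithin (u i) (Set.Icc (A' i) (B' i))) ≤
        supIcc (A' i) (B' i) (derivWithin (a i) (Set.Icc (A' i) (B' i))) +
          d * Kap d δ L / δ * vecCNorm d A' B' a := by
      intro i _
      refine supIcc_le (add_nonneg supIcc_nonneg (by positivity)) fun x hx => ?_
      have hud := uniqueDiffOn_Icc (hAB' i)
      have hda : HasDerivWithinAt (a i) (derivWithin (a i) (Set.Icc (A' i) (B' i)) x)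
          (Set.Icc (A' i) (B' i)) x :=
        (((ha i).differentiableOn (by norm_num)) x hx).hasDerivWithinAt
      have hdu : HasDerivWithinAt (u i)
          (calHD d A B u i x + derivWithin (a i) (Set.Icc (A' i) (B' i)) x)
          (Set.Icc (A' i) (B' i)) x :=
        ((calH_deriv hAB huA (hoff i x hx)).hasDerivWithinAt.add hda).congr
          (fun y hy => heq i y hy) (heq i x hx)
      rw [hdu.derivWithin (hud x hx)]
      have h2 := calHD_bound hAB (hoff i x hx) (by positivity) hδ (hg i x hx) hb
      have h3 := le_supIcc ((ha i).continuousOn_derivWithin hud (by norm_num)) hx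
      refine (abs_add_le _ _).trans ?_
      have : d * (Kap d δ L * vecCNorm d A' B' a) / δ =
        d * Kap d δ L / δ * vecCNorm d A' B' a := by ring
      linarith
    have h4 := Finset.sum_le_sum hder
    rw [Finset.sum_add_distrib, Finset.sum_const, Finset.card_univ, Fintype.card_fin,
      nsmul_eq_mul] at h4
    have h5 := vecC1Norm_eq (A := A') (B := B') (a := u)
    have h6 := vecC1Norm_eq (A := A') (B := B') (a := a)
    have h7 := mul_le_mul_of_nonneg_left hN1
      (by positivity : 0 ≤ (d:ℝ) * (1 + d * Kap d δ L / 2) + d * (d * Kap d δ L / δ))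
    unfold Kfin
    linarith

end general

/-! ### Uniform gaps -/

lemma gap_of_dist {d : ℕ} {A B : Fin d → ℝ} {δ : ℝ}
    (h : ∀ i j, i ≠ j → δ ≤ max (A i - B j) (A j - B i)) : Gap d A B δ := by
  intro i j hij x hx t ht
  rcases le_max_iff.1 (h i j hij) with h1 | h1
  · exact le_trans (by linarith [hx.1, ht.2]) (le_abs_self _)
  · exact le_trans (by linarith [hx.2, ht.1]) (neg_le_abs _)

lemma sepDist_pos {a b a' b' : ℝ} (hab : a < b) (hab' : a' < b')
    (h : Disjoint (Set.Icc a b) (Set.Icc a' b')) : 0 < max (a - b') (a' - b) := by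
  by_contra hc
  rw [not_lt, max_le_iff] at hc
  have hh : max a a' ∈ Set.Icc a b → max a a' ∉ Set.Icc a' b' := fun hx =>
    Set.disjoint_left.1 h hx
  refine hh ⟨le_max_left _ _, ?_⟩
    ⟨le_max_right _ _, ?_⟩
  · exact max_le hab.le (by linarith)
  · exact max_le (by linarith) hab'.le

lemma unif_pos {f : ℕ → ℝ} {l : ℝ} (hf : ∀ n, 0 < f n) (hl : 0 < l)
    (h : Tendsto f atTop (𝓝 l)) : ∃ δ > 0, ∀ n, δ ≤ f n := by
  have hb : Tendsto (fun n => (f n)⁻¹) atTop (𝓝 l⁻¹) := h.inv₀ hl.ne'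
  obtain ⟨M, hM⟩ := hb.bddAbove_range
  have hM' : ∀ n, (f n)⁻¹ ≤ M := fun n => hM ⟨n, rfl⟩
  have hMpos : 0 < M := lt_of_lt_of_le (inv_pos.2 (hf 0)) (hM' 0)
  exact ⟨M⁻¹, inv_pos.2 hMpos, fun n => inv_le_of_inv_le₀ (hf n) (hM' n)⟩

lemma unif_gap {d : ℕ} {A B : Fin d → ℝ} {An Bn : ℕ → Fin d → ℝ} (hAB : ∀ i, A i < B i)
    (hdisj : ∀ i j, i ≠ j → Disjoint (Set.Icc (A i) (B i)) (Set.Icc (A j) (B j)))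
    (hABn : ∀ n i, An n i < Bn n i)
    (hdisjn : ∀ n, ∀ i j, i ≠ j →
      Disjoint (Set.Icc (An n i) (Bn n i)) (Set.Icc (An n j) (Bn n j)))
    (hconvA : ∀ i, Tendsto (fun n => An n i) atTop (𝓝 (A i)))
    (hconvB : ∀ i, Tendsto (fun n => Bn n i) atTop (𝓝 (B i))) :
    ∃ δ > 0, ∀ n, Gap d (An n) (Bn n) δ := by
  have h : ∀ p : Fin d × Fin d, ∃ δ > 0, p.1 ≠ p.2 →
      ∀ n, δ ≤ max (An n p.1 - Bn n p.2) (An n p.2 - Bn n p.1) := by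
    rintro ⟨i, j⟩
    by_cases hij : i = j
    · exact ⟨1, one_pos, fun h => absurd hij h⟩
    · obtain ⟨δ, h1, h2⟩ := unif_pos
        (fun n => sepDist_pos (hABn n i) (hABn n j) (hdisjn n i j hij))
        (sepDist_pos (hAB i) (hAB j) (hdisj i j hij))
        (((hconvA i).sub (hconvB j)).max ((hconvA j).sub (hconvB i)))
      exact ⟨δ, h1, fun _ => h2⟩
  choose δ h1 h2 using h
  by_cases hd : Nonempty (Fin d × Fin d)
  · refine ⟨Finset.univ.inf' Finset.univ_nonempty δ, ?_, fun n => gap_of_dist fun i j hij => ?_⟩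
    · exact (Finset.lt_inf'_iff _).2 fun p _ => h1 p
    · exact (Finset.inf'_le δ (Finset.mem_univ (i, j))).trans (h2 (i, j) hij n)
  · exact ⟨1, one_pos, fun n i => absurd ⟨(i, i)⟩ hd⟩

lemma unif_len {d : ℕ} {A B : Fin d → ℝ} {An Bn : ℕ → Fin d → ℝ}
    (hABn : ∀ n i, An n i < Bn n i)
    (hconvA : ∀ i, Tendsto (fun n => An n i) atTop (𝓝 (A i)))
    (hconvB : ∀ i, Tendsto (fun n => Bn n i) atTop (𝓝 (B i))) :
    ∃ L : ℝ, 0 ≤ L ∧ ∀ n i, Bn n i - An n i ≤ L := by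
  have h : ∀ i, ∃ M : ℝ, ∀ n, Bn n i - An n i ≤ M := by
    intro i
    obtain ⟨M, hM⟩ := ((hconvB i).sub (hconvA i)).bddAbove_range
    exact ⟨M, fun n => hM ⟨n, rfl⟩⟩
  choose M hM using h
  have hM0 : ∀ i, 0 ≤ M i := fun i => by linarith [hM i 0, hABn 0 i]
  exact ⟨∑ i, M i, Finset.sum_nonneg fun i _ => hM0 i, fun n i => (hM i n).trans
    (Finset.single_le_sum (fun i _ => hM0 i) (Finset.mem_univ i))⟩

/-- Lemma 3.9: the operators `(I − ℋ_{Δ⃗_n})⁻¹` are uniformly bounded on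
`C(Δ⃗_n)` and `C¹(Δ⃗_n)`, and the operators `(I − ℋ_{Δ⃗_n,Δ⃗′})⁻¹` are uniformly bounded on
`C(Δ⃗′)` and `C¹(Δ⃗′)`. -/
theorem inverse_uniformly_bounded
    (d : ℕ) (A B : Fin d → ℝ) (hAB : ∀ i, A i < B i)
    (hdisj : ∀ i j, i ≠ j → Disjoint (Set.Icc (A i) (B i)) (Set.Icc (A j) (B j)))
    -- intervals `Δ⃗_n`, pairwise disjoint, converging to `Δ⃗`
    (An Bn : ℕ → Fin d → ℝ)
    (hABn : ∀ n i, An n i < Bn n i)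
    (hdisjn : ∀ n, ∀ i j, i ≠ j →
      Disjoint (Set.Icc (An n i) (Bn n i)) (Set.Icc (An n j) (Bn n j)))
    (hconvA : ∀ i, Tendsto (fun n => An n i) atTop (𝓝 (A i)))
    (hconvB : ∀ i, Tendsto (fun n => Bn n i) atTop (𝓝 (B i))) :
    -- uniform bound for `(I − ℋ_{Δ⃗_n})⁻¹` on `C(Δ⃗_n)` and on `C¹(Δ⃗_n)`
    (∃ C : ℝ, ∀ n,
      InvBoundedBy d (An n) (Bn n) (An n) (Bn n)
        (memVecC d (An n) (Bn n)) (vecCNorm d (An n) (Bn n)) C ∧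
      InvBoundedBy d (An n) (Bn n) (An n) (Bn n)
        (memVecC1 d (An n) (Bn n)) (vecC1Norm d (An n) (Bn n)) C) ∧
    -- uniform bound for `(I − ℋ_{Δ⃗_n,Δ⃗′})⁻¹` on `C(Δ⃗′)` and on `C¹(Δ⃗′)`
    (∀ A' B' : Fin d → ℝ,
      (∀ i, A' i < B' i) →
      (∀ i j, i ≠ j → Disjoint (Set.Icc (A' i) (B' i)) (Set.Icc (A' j) (B' j))) →
      (∀ n i, Set.Icc (An n i) (Bn n i) ⊆ Set.Icc (A' i) (B' i)) →
      ∃ C' : ℝ, ∀ n,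
        InvBoundedBy d (An n) (Bn n) A' B'
          (memVecC d A' B') (vecCNorm d A' B') C' ∧
        InvBoundedBy d (An n) (Bn n) A' B'
          (memVecC1 d A' B') (vecC1Norm d A' B') C') := by
  obtain ⟨L, hL0, hL⟩ := unif_len hABn hconvA hconvB
  refine ⟨?_, ?_⟩
  · obtain ⟨δ, hδ, hgap⟩ := unif_gap hAB hdisj hABn hdisjn hconvA hconvB
    exact ⟨Kfin d δ L, fun n => general_bound (hABn n) (hABn n) (fun i => subset_rfl) hδ
      (hgap n) hL0 (hL n)⟩
  · intro A' B' hAB' hdisj' hsub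
    obtain ⟨δ, hδ, hgap⟩ := unif_gap (An := fun _ => A') (Bn := fun _ => B') hAB' hdisj'
      (fun _ => hAB') (fun _ => hdisj') (fun _ => tendsto_const_nhds) (fun _ => tendsto_const_nhds)
    exact ⟨Kfin d δ L, fun n => general_bound (hABn n) hAB' (hsub n) hδ (hgap 0) hL0 (hL n)⟩

end
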